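/- arXiv:2506.11296 — 3 statements merged into one kernel-verified Lean document; each statement's English description precedes it below -/
import Mathlib

section
/- Let d ≥ 1 be an integer, α ∈ (0,1), and let v ∈ ℝ^d be a unit vector. If 0 < m < 2√(1 − γ_α), then u_{α,1}(t, m t v) → ∞ as t → ∞. -/
open Real MeasureTheory Filter Topology

/-- The Wright function `W_{λ,μ}(z) = ∑ z^n / (n! Γ(λn+μ))`.
(In Mathlib, `Real.Gamma` vanishes at nonpositive integers, so `1/Γ(s) = 0` there.) -/
noncomputable def wrightFn (l μ z : ℝ) : ℝ :=
  ∑' n : ℕ, z ^ n / (n.factorial * Real.Gamma (l * n + μ))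

/-- The fundamental solution `u_{α,1}` of `∂_t^α u − Δu = u`, `u(0,·)=δ₀`,
via the subordination formula. -/
noncomputable def fundSol (α : ℝ) (d : ℕ) (t : ℝ) (x : EuclideanSpace ℝ (Fin d)) : ℝ :=
  t ^ (-α) * ∫ s in Set.Ioi (0 : ℝ),
    Real.exp s * (Real.exp (-‖x‖ ^ 2 / (4 * s)) / (4 * Real.pi * s) ^ ((d : ℝ) / 2)) *
      wrightFn (-α) (1 - α) (-(t ^ (-α) * s))

/-- `γ_α = (1-α) α^{α/(1-α)}`. -/
noncomputable def gammaAlpha (α : ℝ) : ℝ := (1 - α) * α ^ (α / (1 - α))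

/- Write `M_α(r) = W_{-α,1-α}(-r)` for the subordination density. Rescaled by `n ^ α`, the number of
renewals up to time `n` of a process with Sibuya waiting times has a law converging to `M_α`, which
gives `M_α ≥ 0` and the moments `∫ r ^ k M_α(r) dr = k! / Γ(αk + 1)`. Hence
`∫ exp (z r) M_α(r) dr` is the Mittag-Leffler function `E_α(z)`, and `E_α(T ^ α)` is at least
`(exp T - 1) / T`. For `A < 1` the integrand `exp s * heatKernel d s ‖x‖` of `fundSol` dominates a
multiple of `exp (-‖x‖ / 2) * exp (A s) - 1`, so along `‖x‖ = m t` the solution is at least of the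
order of `exp (-m t / 2) * E_α((q t) ^ α)` for any `q < 1`, which diverges as soon as
`m / 2 < q`. -/

/-- The formal power series of `(1 - X) ^ a` for a real exponent `a`. -/
noncomputable def oneSubPow (a : ℝ) : PowerSeries ℝ :=
  PowerSeries.rescale (-1 : ℝ) (PowerSeries.binomialSeries ℝ a)

lemma oneSubPow_zero : oneSubPow 0 = 1 := by
  simp [oneSubPow, PowerSeries.binomialSeries_zero]

lemma oneSubPow_add (a b : ℝ) : oneSubPow (a + b) = oneSubPow a * oneSubPow b := by
  simp [oneSubPow]

lemma oneSubPow_mul_natCast (a : ℝ) (j : ℕ) : oneSubPow (a * j) = oneSubPow a ^ j := by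
  induction j with
  | zero => simp [oneSubPow_zero]
  | succ j ih => rw [pow_succ, ← ih, ← oneSubPow_add, Nat.cast_succ, mul_add_one]

lemma coeff_oneSubPow (a : ℝ) (n : ℕ) :
    PowerSeries.coeff n (oneSubPow a) = ∏ i ∈ Finset.range n, (1 - (a + 1) / (i + 1)) := by
  rw [oneSubPow, PowerSeries.coeff_rescale, PowerSeries.binomialSeries_coeff, Ring.choose_eq_smul]
  simp only [smul_eq_mul, mul_one]
  induction n with
  | zero => simp
  | succ n ih =>
    rw [Finset.prod_range_succ, ← ih, descPochhammer_succ_right, Polynomial.smeval_mul]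
    have hn : (n : ℝ) + 1 ≠ 0 := by positivity
    have hf : (n.factorial : ℝ) ≠ 0 := by positivity
    simp only [Nat.factorial_succ, Nat.cast_mul, Nat.cast_succ, Polynomial.smeval_sub,
      Polynomial.smeval_X, Polynomial.smeval_natCast, pow_one, pow_zero, nsmul_eq_mul, mul_one]
    field_simp
    ring

lemma constantCoeff_oneSubPow (a : ℝ) : PowerSeries.constantCoeff (oneSubPow a) = 1 := by
  rw [← PowerSeries.coeff_zero_eq_constantCoeff_apply, coeff_oneSubPow, Finset.prod_range_zero]

lemma one_sub_div_add_one_nonneg {b : ℝ} {i : ℕ} (h : b ≤ i + 1) : 0 ≤ 1 - b / ((i : ℝ) + 1) :=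
  sub_nonneg.2 (div_le_one_of_le₀ h (by positivity))

lemma coeff_oneSubPow_nonneg {a : ℝ} (ha : a ≤ 0) (n : ℕ) :
    0 ≤ PowerSeries.coeff n (oneSubPow a) := by
  rw [coeff_oneSubPow]
  exact Finset.prod_nonneg fun i _ ↦
    one_sub_div_add_one_nonneg (by linarith [(Nat.cast_nonneg i : (0 : ℝ) ≤ i)])

lemma coeff_succ_oneSubPow_nonpos {a : ℝ} (ha0 : 0 ≤ a) (ha1 : a ≤ 1) (n : ℕ) :
    PowerSeries.coeff (n + 1) (oneSubPow a) ≤ 0 := by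
  rw [coeff_oneSubPow, Finset.prod_range_succ']
  refine mul_nonpos_of_nonneg_of_nonpos (Finset.prod_nonneg fun i _ ↦ ?_) (by simpa using ha0)
  refine one_sub_div_add_one_nonneg ?_
  push_cast
  linarith [(Nat.cast_nonneg i : (0 : ℝ) ≤ i)]

lemma prod_range_succ_neg_add (a : ℝ) (n : ℕ) :
    ∏ j ∈ Finset.range (n + 1), (-a + (j : ℝ)) =
      n.factorial * PowerSeries.coeff n (oneSubPow a) * (n + -a) := by
  rw [Finset.prod_range_succ, coeff_oneSubPow, ← Finset.prod_range_add_one_eq_factorial,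
    Nat.cast_prod, ← Finset.prod_mul_distrib, add_comm (n : ℝ)]
  congr 1
  refine Finset.prod_congr rfl fun i _ ↦ ?_
  push_cast
  field_simp
  ring

/- The finite product is Euler's sequence for `Γ (-a)`; at the poles of `Γ` both sides vanish. -/
lemma tendsto_rpow_mul_coeff_oneSubPow (a : ℝ) :
    Tendsto (fun n : ℕ ↦ (n : ℝ) ^ (a + 1) * PowerSeries.coeff n (oneSubPow a)) atTop
      (𝓝 (1 / Gamma (-a))) := by
  by_cases hG : Gamma (-a) = 0
  · rw [hG, div_zero]
    obtain ⟨m, hm⟩ := (Real.Gamma_eq_zero_iff _).1 hG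
    refine tendsto_const_nhds.congr' ?_
    filter_upwards [eventually_ge_atTop (m + 1)] with n hn
    have hfactor : (1 : ℝ) - (a + 1) / (m + 1) = 0 := by
      rw [neg_inj.1 hm, div_self (by positivity), sub_self]
    rw [coeff_oneSubPow, Finset.prod_eq_zero (Finset.mem_range.2 hn) hfactor, mul_zero]
  · have hlim := ((Real.GammaSeq_tendsto_Gamma (-a)).inv₀ hG).mul
      (tendsto_natCast_div_add_atTop (-a))
    rw [mul_one, ← one_div] at hlim
    refine hlim.congr' ?_
    filter_upwards [eventually_gt_atTop ⌈|a|⌉₊] with n hn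
    have hn' : |a| < n := Nat.lt_of_ceil_lt hn
    have hn0 : (0 : ℝ) < n := (abs_nonneg a).trans_lt hn'
    have hne : (n : ℝ) + -a ≠ 0 := by linarith [le_abs_self a]
    have hf : (n.factorial : ℝ) ≠ 0 := by positivity
    have hpow : (n : ℝ) ^ (a + 1) ≠ 0 := (rpow_pos_of_pos hn0 _).ne'
    have hpow' : (n : ℝ) ^ (-a) = n / (n : ℝ) ^ (a + 1) := by
      rw [eq_div_iff hpow, ← rpow_add hn0, neg_add_cancel_left, rpow_one]
    rw [Real.GammaSeq, prod_range_succ_neg_add, hpow']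
    field_simp

lemma exp_mul_abs_one_sub_le_one {y : ℝ} (hy : y ≤ 1) : exp y * |1 - y| ≤ 1 := by
  calc exp y * |1 - y| ≤ exp y * exp (-y) := by
        rw [abs_of_nonneg (by linarith)]
        gcongr
        exact one_sub_le_exp_neg y
    _ = 1 := by rw [← exp_add, add_neg_cancel, exp_zero]

lemma rpow_le_exp_mul_harmonic {b : ℝ} (hb : 0 ≤ b) {n : ℕ} (hn : n ≠ 0) :
    (n : ℝ) ^ b ≤ exp (b * harmonic n) := by
  have hn0 : (0 : ℝ) < n := by positivity
  rw [rpow_def_of_pos hn0, mul_comm]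
  gcongr
  exact (log_le_log hn0 (by push_cast; linarith)).trans (log_add_one_le_harmonic n)

lemma exp_mul_harmonic (b : ℝ) (n : ℕ) :
    exp (b * harmonic n) = ∏ i ∈ Finset.range n, exp (b / (i + 1)) := by
  simp only [harmonic, Rat.cast_sum, Finset.mul_sum, exp_sum, div_eq_mul_inv]
  push_cast
  rfl

lemma prod_range_div_add_one (b : ℝ) (n : ℕ) :
    ∏ i ∈ Finset.range n, b / ((i : ℝ) + 1) = b ^ n / n.factorial := by
  rw [Finset.prod_div_distrib, Finset.prod_const, Finset.card_range,
    ← Finset.prod_range_add_one_eq_factorial]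
  push_cast
  rfl

lemma harmonic_le_one_add_log_add_one {b : ℝ} (hb : 0 ≤ b) {n : ℕ} (hn : (n : ℝ) ≤ b) :
    (harmonic n : ℝ) ≤ 1 + log (b + 1) := by
  rcases Nat.eq_zero_or_pos n with rfl | hpos
  · simpa using add_nonneg zero_le_one (log_nonneg (by linarith : 1 ≤ b + 1))
  · refine (harmonic_le_one_add_log n).trans ?_
    gcongr
    linarith

lemma prod_range_exp_mul_abs_one_sub_le {b : ℝ} {k : ℕ} (hkb : (k : ℝ) ≤ b) :
    ∏ i ∈ Finset.range k, exp (b / (i + 1)) * |1 - b / (i + 1)| ≤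
      exp (b * harmonic k) * (b ^ k / k.factorial) := by
  rw [exp_mul_harmonic, ← prod_range_div_add_one, ← Finset.prod_mul_distrib]
  refine Finset.prod_le_prod (fun _ _ ↦ by positivity) fun i hi ↦ ?_
  have hib : (i : ℝ) + 1 ≤ b :=
    le_trans (by exact_mod_cast Finset.mem_range.1 hi) hkb
  have hy : 1 ≤ b / ((i : ℝ) + 1) := (one_le_div (by positivity)).2 hib
  gcongr
  rw [abs_of_nonpos (by linarith)]
  linarith

/- With `b = a + 1` and `n ^ b ≤ exp (b * harmonic n)`, distribute the exponential over the factors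
`|1 - b / (i + 1)|`: those with `i + 1 ≥ b` then contribute at most `1`, and the remaining ones
multiply to at most `exp (b * harmonic ⌊b⌋) * b ^ ⌊b⌋ / ⌊b⌋!`. -/
lemma rpow_mul_abs_coeff_oneSubPow_le {a : ℝ} (ha : -1 < a) {n : ℕ} (hn : n ≠ 0) :
    (n : ℝ) ^ (a + 1) * |PowerSeries.coeff n (oneSubPow a)| ≤ (exp 2 * (a + 2)) ^ (a + 1) := by
  rw [coeff_oneSubPow, show a + 2 = a + 1 + 1 by ring]
  set b := a + 1
  have hb : 0 < b := by simp only [b]; linarith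
  set k := min n ⌊b⌋₊
  have hkb : (k : ℝ) ≤ b := (Nat.cast_le.2 (min_le_right _ _)).trans (Nat.floor_le hb.le)
  have htail : ∏ i ∈ Finset.Ico k n, exp (b / (i + 1)) * |1 - b / (i + 1)| ≤ 1 := by
    refine Finset.prod_le_one (fun _ _ ↦ by positivity) fun i hi ↦ ?_
    refine exp_mul_abs_one_sub_le_one (div_le_one_of_le₀ ?_ (by positivity))
    obtain ⟨hki, hin⟩ := Finset.mem_Ico.1 hi
    have hbi : ⌊b⌋₊ ≤ i := (min_le_iff.1 hki).resolve_left (by omega)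
    exact (Nat.lt_floor_add_one b).le.trans (by gcongr)
  calc (n : ℝ) ^ b * |∏ i ∈ Finset.range n, (1 - b / (i + 1))|
      ≤ exp (b * harmonic n) * |∏ i ∈ Finset.range n, (1 - b / (i + 1))| := by
        gcongr
        exact rpow_le_exp_mul_harmonic hb.le hn
    _ = (∏ i ∈ Finset.range k, exp (b / (i + 1)) * |1 - b / (i + 1)|) *
          ∏ i ∈ Finset.Ico k n, exp (b / (i + 1)) * |1 - b / (i + 1)| := by
        rw [Finset.prod_range_mul_prod_Ico _ (min_le_left _ _), exp_mul_harmonic, Finset.abs_prod,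
          Finset.prod_mul_distrib]
    _ ≤ exp (b * harmonic k) * (b ^ k / k.factorial) * 1 := by
        gcongr
        exact prod_range_exp_mul_abs_one_sub_le hkb
    _ ≤ exp (b * (1 + log (b + 1))) * exp b * 1 := by
        gcongr
        · exact harmonic_le_one_add_log_add_one hb.le hkb
        · exact Real.pow_div_factorial_le_exp b hb.le k
    _ = (exp 2 * (b + 1)) ^ b := by
        rw [mul_one, ← exp_add, rpow_def_of_pos (by positivity),
          log_mul (exp_ne_zero _) (by positivity), log_exp]
        ring_nf

lemma coeff_mul_nonneg {R : Type*} [Semiring R] [PartialOrder R] [IsOrderedRing R]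
    {f g : PowerSeries R} (hf : ∀ n, 0 ≤ PowerSeries.coeff n f)
    (hg : ∀ n, 0 ≤ PowerSeries.coeff n g) (n : ℕ) : 0 ≤ PowerSeries.coeff n (f * g) := by
  rw [PowerSeries.coeff_mul]
  exact Finset.sum_nonneg fun p _ ↦ mul_nonneg (hf p.1) (hg p.2)

lemma coeff_pow_nonneg {R : Type*} [Semiring R] [PartialOrder R] [IsOrderedRing R]
    {f : PowerSeries R} (hf : ∀ n, 0 ≤ PowerSeries.coeff n f) (j n : ℕ) :
    0 ≤ PowerSeries.coeff n (f ^ j) := by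
  induction j generalizing n with
  | zero =>
    rw [pow_zero, PowerSeries.coeff_one]
    split_ifs <;> simp
  | succ j ih => rw [pow_succ]; exact coeff_mul_nonneg ih hf n

lemma coeff_mul_subst {R : Type*} [CommRing R] {G : PowerSeries R} (hG : PowerSeries.X ∣ G)
    (f A : PowerSeries R) (n : ℕ) :
    PowerSeries.coeff n (A * f.subst G) =
      ∑ j ∈ Finset.range (n + 1), PowerSeries.coeff j f * PowerSeries.coeff n (A * G ^ j) := by
  have hsubst : PowerSeries.HasSubst G :=
    PowerSeries.HasSubst.of_constantCoeff_zero' (PowerSeries.X_dvd_iff.1 hG)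
  have hcoeff (m : ℕ) (hm : m ≤ n) : PowerSeries.coeff m (f.subst G) =
      ∑ j ∈ Finset.range (n + 1), PowerSeries.coeff j f * PowerSeries.coeff m (G ^ j) := by
    rw [PowerSeries.coeff_subst' hsubst]
    refine finsum_eq_sum_of_support_subset _ fun j hj ↦ ?_
    by_contra hjn
    rw [Finset.coe_range, Set.mem_Iio, not_lt] at hjn
    refine hj ?_
    simp only [PowerSeries.X_pow_dvd_iff.1 (pow_dvd_pow_of_dvd hG j) m (by omega), smul_zero]
  simp only [PowerSeries.coeff_mul, Finset.mul_sum]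
  rw [Finset.sum_comm]
  refine Finset.sum_congr rfl fun p hp ↦ ?_
  rw [hcoeff p.2 (Finset.HasAntidiagonal.antidiagonal.snd_le hp), Finset.mul_sum]
  exact Finset.sum_congr rfl fun j _ ↦ mul_left_comm _ _ _

lemma X_dvd_one_sub_oneSubPow (a : ℝ) : PowerSeries.X ∣ 1 - oneSubPow a := by
  rw [PowerSeries.X_dvd_iff, map_sub, constantCoeff_oneSubPow, map_one, sub_self]

/-- The probability that a renewal process whose waiting times have generating function
`1 - (1 - X) ^ α` (Sibuya's law) has exactly `j` renewals up to time `n`. Since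
`(1 - X) ^ (α - 1)` is the generating function of the tails of the waiting times, this is the
`n`-th coefficient of `(1 - X) ^ (α - 1) * (1 - (1 - X) ^ α) ^ j`. -/
noncomputable def renewalProb (α : ℝ) (n j : ℕ) : ℝ :=
  PowerSeries.coeff n (oneSubPow (α - 1) * (1 - oneSubPow α) ^ j)

lemma renewalProb_nonneg {α : ℝ} (h0 : 0 ≤ α) (h1 : α ≤ 1) (n j : ℕ) : 0 ≤ renewalProb α n j := by
  refine coeff_mul_nonneg (coeff_oneSubPow_nonneg (by linarith)) (coeff_pow_nonneg ?_ j) n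
  rintro (_ | i)
  · simp [constantCoeff_oneSubPow]
  · simpa [PowerSeries.coeff_one] using coeff_succ_oneSubPow_nonpos h0 h1 i

lemma renewalProb_eq_zero_of_lt (α : ℝ) {n j : ℕ} (h : n < j) : renewalProb α n j = 0 :=
  PowerSeries.X_pow_dvd_iff.1
    ((pow_dvd_pow_of_dvd (X_dvd_one_sub_oneSubPow α) j).mul_left _) n h

lemma renewalProb_eq_sum (α : ℝ) (n j : ℕ) :
    renewalProb α n j = ∑ i ∈ Finset.range (j + 1),
      (-1) ^ i * j.choose i * PowerSeries.coeff n (oneSubPow (α * (i + 1) - 1)) := by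
  have hterm (i : ℕ) : oneSubPow (α * (i + 1) - 1) = oneSubPow (α - 1) * oneSubPow α ^ i := by
    rw [← oneSubPow_mul_natCast, ← oneSubPow_add]
    ring_nf
  rw [renewalProb, sub_eq_neg_add 1 (oneSubPow α), add_pow, Finset.mul_sum, map_sum]
  refine Finset.sum_congr rfl fun i _ ↦ ?_
  rw [hterm, ← PowerSeries.coeff_C_mul]
  congr 1
  simp only [one_pow, mul_one, neg_pow (oneSubPow α), map_mul, map_pow, map_neg, map_one,
    map_natCast]
  ring

/- Substitute `1 - (1 - X) ^ α` for `X` in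
`∑ j, (k + j).choose k * X ^ j = (1 - X) ^ (-(k + 1))`. -/
lemma sum_choose_mul_renewalProb (α : ℝ) (n k : ℕ) :
    ∑ j ∈ Finset.range (n + 1), ((k + j).choose k : ℝ) * renewalProb α n j =
      PowerSeries.coeff n (oneSubPow (-(α * k + 1))) := by
  set G := 1 - oneSubPow α
  have hG : PowerSeries.HasSubst G :=
    PowerSeries.HasSubst.of_constantCoeff_zero' (by simp [G, constantCoeff_oneSubPow])
  set S := PowerSeries.mk fun j ↦ ((k + j).choose k : ℝ)
  have hS : PowerSeries.subst G S * oneSubPow α ^ (k + 1) = 1 := by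
    have h := congrArg (PowerSeries.substAlgHom hG)
      (PowerSeries.mk_add_choose_mul_one_sub_pow_eq_one ℝ k)
    rwa [map_mul, map_pow, map_sub, map_one, PowerSeries.coe_substAlgHom,
      PowerSeries.subst_X hG, sub_sub_cancel] at h
  have hprod : oneSubPow (-(α * k + 1)) = oneSubPow (α - 1) * PowerSeries.subst G S := by
    calc oneSubPow (-(α * k + 1)) = oneSubPow (-(α * k + 1)) *
          (PowerSeries.subst G S * oneSubPow (α * (k + 1 : ℕ))) := by
          rw [oneSubPow_mul_natCast, hS, mul_one]
      _ = oneSubPow (α - 1) * PowerSeries.subst G S := by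
          rw [mul_left_comm, ← oneSubPow_add, mul_comm]
          push_cast
          ring_nf
  rw [hprod, coeff_mul_subst (X_dvd_one_sub_oneSubPow α)]
  simp only [S, PowerSeries.coeff_mk, renewalProb]

lemma choose_floor_div_pow_le {r N : ℝ} (hr : 0 ≤ r) (hN : 0 < N) (i : ℕ) :
    (⌊r * N⌋₊.choose i : ℝ) / N ^ i ≤ r ^ i / i.factorial := by
  calc (⌊r * N⌋₊.choose i : ℝ) / N ^ i ≤ (r * N) ^ i / i.factorial / N ^ i := by
        gcongr
        refine (Nat.choose_le_pow_div i ⌊r * N⌋₊).trans ?_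
        gcongr
        exact Nat.floor_le (by positivity)
    _ = r ^ i / i.factorial := by
        rw [mul_pow]
        field_simp

lemma tendsto_choose_floor_div_pow {r : ℝ} (hr : 0 < r) (i : ℕ) :
    Tendsto (fun N : ℝ ↦ (⌊r * N⌋₊.choose i : ℝ) / N ^ i) atTop (𝓝 (r ^ i / i.factorial)) := by
  have hfloor : Tendsto (fun N : ℝ ↦ ⌊r * N⌋₊) atTop atTop :=
    tendsto_nat_floor_atTop.comp (tendsto_id.const_mul_atTop hr)
  have hequiv := ((isEquivalent_choose i).comp_tendsto hfloor).div
    (Asymptotics.IsEquivalent.refl (u := fun N : ℝ ↦ N ^ i))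
  refine (Asymptotics.IsEquivalent.tendsto_nhds_iff hequiv).2 ?_
  refine (((tendsto_nat_floor_mul_div_atTop hr.le).pow i).div_const _).congr fun N ↦ ?_
  simp only [Pi.div_apply, Function.comp_apply, div_pow]
  ring

lemma summable_pow_div_factorial_rpow {c : ℝ} (hc : 0 < c) (x : ℝ) :
    Summable fun i : ℕ ↦ x ^ i / (i.factorial : ℝ) ^ c := by
  have hgrow : Tendsto (fun i : ℕ ↦ ((i + 1 : ℕ) : ℝ) ^ c) atTop atTop :=
    (tendsto_rpow_atTop hc).comp (tendsto_natCast_atTop_atTop.comp (tendsto_add_atTop_nat 1))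
  refine summable_of_ratio_norm_eventually_le (r := 1 / 2) (by norm_num) ?_
  filter_upwards [hgrow.eventually_ge_atTop (2 * |x|)] with i hi
  have hpos : 0 < ((i + 1 : ℕ) : ℝ) ^ c := by positivity
  have hratio : x ^ (i + 1) / ((i + 1).factorial : ℝ) ^ c =
      x / ((i + 1 : ℕ) : ℝ) ^ c * (x ^ i / (i.factorial : ℝ) ^ c) := by
    rw [Nat.factorial_succ, Nat.cast_mul, mul_rpow (by positivity) (by positivity), pow_succ]
    field_simp
  rw [hratio, norm_mul, norm_div, Real.norm_of_nonneg hpos.le, norm_eq_abs x]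
  refine mul_le_mul_of_nonneg_right ?_ (norm_nonneg _)
  rw [div_le_iff₀ hpos]
  linarith

lemma exp_mul_rpow_le_factorial_rpow {α : ℝ} (h0 : 0 ≤ α) (h1 : α ≤ 1) (i : ℕ) :
    (exp 2 * (α * (i + 1) + 1)) ^ (α * (i + 1)) ≤
      exp (4 * α) ^ (i + 1) * (i.factorial : ℝ) ^ α := by
  have hstirling : ((i : ℝ) + 2) ^ (i + 1) ≤ exp (i + 2) * (exp i * i.factorial) := by
    have h := Real.pow_div_factorial_le_exp ((i : ℝ) + 2) (by positivity) (i + 1)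
    rw [div_le_iff₀ (by positivity), Nat.factorial_succ, Nat.cast_mul] at h
    refine h.trans ?_
    gcongr
    push_cast
    exact add_one_le_exp _
  calc (exp 2 * (α * (i + 1) + 1)) ^ (α * (i + 1))
      ≤ (exp 2 * (i + 2)) ^ (α * (i + 1)) := by
        have hle : α * (i + 1) + 1 ≤ i + 2 := by
          nlinarith [(Nat.cast_nonneg i : (0 : ℝ) ≤ i)]
        gcongr
    _ = (exp 2 ^ (i + 1) * ((i : ℝ) + 2) ^ (i + 1)) ^ α := by
        rw [← mul_pow, ← rpow_natCast, ← rpow_mul (by positivity), mul_comm α]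
        push_cast
        rfl
    _ ≤ (exp 2 ^ (i + 1) * (exp (i + 2) * (exp i * i.factorial))) ^ α := by gcongr
    _ = (exp 4 ^ (i + 1) * i.factorial) ^ α := by
        simp only [← mul_assoc, ← exp_nat_mul, ← exp_add]
        push_cast
        ring_nf
    _ = exp (4 * α) ^ (i + 1) * (i.factorial : ℝ) ^ α := by
        rw [mul_rpow (by positivity) (by positivity), ← exp_nat_mul, ← exp_nat_mul, ← exp_mul]
        ring_nf

section RenewalDensity

variable {α r R : ℝ} {n : ℕ}

/-- The M-Wright (Mainardi) function `M_α(r) = W_{-α,1-α}(-r)`, the probability density on `(0, ∞)`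
that subordinates the heat kernel in `fundSol`. -/
noncomputable def mainardi (α r : ℝ) : ℝ := wrightFn (-α) (1 - α) (-r)

/-- The lattice density approximating `mainardi α`: if `N` has distribution `renewalProb α n`, the
law of `N / n ^ α` has mass `renewalProb α n j` at `j / n ^ α`, spread here over a cell of length
`1 / n ^ α`. -/
noncomputable def renewalDensity (α : ℝ) (n : ℕ) (r : ℝ) : ℝ :=
  (n : ℝ) ^ α * renewalProb α n ⌊r * (n : ℝ) ^ α⌋₊

/-- The terms of the binomial expansion of `renewalDensity`, grouped so that each factor has a
limit as `n → ∞`. -/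
noncomputable def renewalTerm (α : ℝ) (n : ℕ) (r : ℝ) (i : ℕ) : ℝ :=
  (-1) ^ i * (⌊r * (n : ℝ) ^ α⌋₊.choose i / ((n : ℝ) ^ α) ^ i) *
    ((n : ℝ) ^ (α * (i + 1)) * PowerSeries.coeff n (oneSubPow (α * (i + 1) - 1)))

/-- The summable majorant of `renewalTerm α n r`, uniform in `n ≠ 0` and `r ∈ [0, R]`. -/
noncomputable def renewalMajorant (α R : ℝ) (i : ℕ) : ℝ :=
  R ^ i / i.factorial * (exp (4 * α) ^ (i + 1) * (i.factorial : ℝ) ^ α)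

lemma tendsto_natCast_rpow_atTop {a : ℝ} (ha : 0 < a) :
    Tendsto (fun n : ℕ ↦ (n : ℝ) ^ a) atTop atTop :=
  (tendsto_rpow_atTop ha).comp tendsto_natCast_atTop_atTop

lemma renewalDensity_nonneg (h0 : 0 ≤ α) (h1 : α ≤ 1) (n : ℕ) (r : ℝ) : 0 ≤ renewalDensity α n r :=
  mul_nonneg (by positivity) (renewalProb_nonneg h0 h1 n _)

lemma renewalDensity_eq_tsum (α : ℝ) (hn : n ≠ 0) (r : ℝ) :
    renewalDensity α n r = ∑' i, renewalTerm α n r i := by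
  have hn0 : (0 : ℝ) < n := by positivity
  rw [renewalDensity, renewalProb_eq_sum, Finset.mul_sum,
    tsum_eq_sum (s := Finset.range (⌊r * (n : ℝ) ^ α⌋₊ + 1))]
  · refine Finset.sum_congr rfl fun i _ ↦ ?_
    have hpow : (n : ℝ) ^ (α * (i + 1)) = ((n : ℝ) ^ α) ^ i * (n : ℝ) ^ α := by
      rw [mul_add_one, rpow_add hn0, rpow_mul hn0.le, rpow_natCast]
    have hne : (n : ℝ) ^ α ≠ 0 := by positivity
    rw [renewalTerm, hpow]
    field_simp
  · intro i hi
    rw [Finset.mem_range, not_lt] at hi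
    simp [renewalTerm, Nat.choose_eq_zero_of_lt hi]

lemma norm_renewalTerm_le (h0 : 0 < α) (h1 : α ≤ 1) (hn : n ≠ 0) (hr : 0 ≤ r) (hrR : r ≤ R)
    (i : ℕ) : ‖renewalTerm α n r i‖ ≤ renewalMajorant α R i := by
  have ha : -1 < α * (i + 1) - 1 := by linarith [show 0 < α * (i + 1) by positivity]
  have hcoeff := rpow_mul_abs_coeff_oneSubPow_le ha hn
  rw [sub_add_cancel, show α * (i + 1) - 1 + 2 = α * (i + 1) + 1 by ring] at hcoeff
  rw [renewalTerm, renewalMajorant, norm_mul, norm_mul, norm_pow, norm_neg, norm_one, one_pow,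
    one_mul, norm_mul, Real.norm_of_nonneg (by positivity : (0 : ℝ) ≤ (n : ℝ) ^ (α * (i + 1))),
    Real.norm_of_nonneg (by positivity)]
  refine mul_le_mul ?_ ?_ (by positivity) (by have := hr.trans hrR; positivity)
  · exact (choose_floor_div_pow_le hr (by positivity) i).trans (by gcongr)
  · exact hcoeff.trans (exp_mul_rpow_le_factorial_rpow h0.le h1 i)

lemma summable_renewalMajorant (h1 : α < 1) (R : ℝ) : Summable (renewalMajorant α R) := by
  refine ((summable_pow_div_factorial_rpow (sub_pos.2 h1) (R * exp (4 * α))).mul_left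
    (exp (4 * α))).congr fun i ↦ ?_
  have hf : (0 : ℝ) < i.factorial := by positivity
  rw [renewalMajorant, rpow_sub hf, rpow_one, mul_pow, pow_succ]
  field_simp

lemma renewalDensity_le (h0 : 0 < α) (h1 : α < 1) (hn : n ≠ 0) (hr : 0 ≤ r) (hrR : r ≤ R) :
    renewalDensity α n r ≤ ∑' i, renewalMajorant α R i := by
  rw [renewalDensity_eq_tsum α hn]
  exact (le_abs_self _).trans (tsum_of_norm_bounded (summable_renewalMajorant h1 R).hasSum
    (norm_renewalTerm_le h0 h1.le hn hr hrR))

lemma tendsto_renewalDensity (h0 : 0 < α) (h1 : α < 1) (hr : 0 < r) :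
    Tendsto (fun n ↦ renewalDensity α n r) atTop (𝓝 (mainardi α r)) := by
  have hterm (i : ℕ) : Tendsto (fun n ↦ renewalTerm α n r i) atTop
      (𝓝 ((-r) ^ i / (i.factorial * Gamma (-α * i + (1 - α))))) := by
    have hchoose := (tendsto_choose_floor_div_pow hr i).comp (tendsto_natCast_rpow_atTop h0)
    have hcoeff := tendsto_rpow_mul_coeff_oneSubPow (α * (i + 1) - 1)
    rw [sub_add_cancel] at hcoeff
    have hlim : (-r) ^ i / (i.factorial * Gamma (-α * i + (1 - α))) =
        (-1) ^ i * (r ^ i / i.factorial) * (1 / Gamma (-(α * (i + 1) - 1))) := by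
      rw [show -(α * (i + 1) - 1) = -α * i + (1 - α) by ring, neg_pow r]
      ring
    rw [hlim]
    exact (hchoose.const_mul ((-1) ^ i)).mul hcoeff
  refine (tendsto_tsum_of_dominated_convergence (summable_renewalMajorant h1 r) hterm ?_).congr' ?_
  · filter_upwards [eventually_ne_atTop 0] with n hn i
    exact norm_renewalTerm_le h0 h1.le hn hr.le le_rfl i
  · filter_upwards [eventually_ne_atTop 0] with n hn
    exact (renewalDensity_eq_tsum α hn r).symm

lemma mainardi_nonneg (h0 : 0 < α) (h1 : α < 1) (hr : 0 < r) : 0 ≤ mainardi α r :=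
  ge_of_tendsto' (tendsto_renewalDensity h0 h1 hr) fun n ↦ renewalDensity_nonneg h0.le h1.le n r

end RenewalDensity

section Limits

variable {f g : ℝ → ℝ} {F G : ℕ → ℝ → ℝ} {a b : ℝ}

lemma integral_Ioi_le_intervalIntegral_add_div (hf : IntegrableOn f (Set.Ioi 0))
    (hg : IntegrableOn g (Set.Ioi 0)) (hf0 : ∀ r > 0, 0 ≤ f r) (hfg : ∀ r > 0, r * f r ≤ g r)
    {R : ℝ} (hR : 0 < R) :
    ∫ r in Set.Ioi 0, f r ≤ (∫ r in 0..R, f r) + (∫ r in Set.Ioi 0, g r) / R := by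
  have hsub : Set.Ioi R ⊆ Set.Ioi (0 : ℝ) := Set.Ioi_subset_Ioi hR.le
  have htail : ∫ r in Set.Ioi R, f r ≤ (∫ r in Set.Ioi 0, g r) / R := by
    calc ∫ r in Set.Ioi R, f r ≤ ∫ r in Set.Ioi R, g r / R := by
          refine setIntegral_mono_on (hf.mono_set hsub) ((hg.mono_set hsub).div_const R)
            measurableSet_Ioi fun r hr ↦ ?_
          have hr0 : 0 < r := hR.trans hr
          rw [le_div_iff₀' hR]
          exact (mul_le_mul_of_nonneg_right (le_of_lt hr) (hf0 r hr0)).trans (hfg r hr0)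
      _ = (∫ r in Set.Ioi R, g r) / R := integral_div _ _
      _ ≤ (∫ r in Set.Ioi 0, g r) / R := by
          gcongr
          exact ae_restrict_of_forall_mem measurableSet_Ioi fun r hr ↦
            (mul_nonneg (le_of_lt hr) (hf0 r hr)).trans (hfg r hr)
  rw [← intervalIntegral.integral_interval_add_Ioi hf (hf.mono_set hsub)]
  gcongr

lemma integrableOn_of_tendsto_integral (hFint : ∀ n, IntegrableOn (F n) (Set.Ioi 0))
    (hF0 : ∀ n, ∀ r > 0, 0 ≤ F n r) (hlim : ∀ r > 0, Tendsto (F · r) atTop (𝓝 (f r)))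
    (ha : Tendsto (fun n ↦ ∫ r in Set.Ioi 0, F n r) atTop (𝓝 a)) :
    IntegrableOn f (Set.Ioi 0) := by
  refine integrable_of_tendsto (ae_restrict_of_forall_mem measurableSet_Ioi hlim)
    (fun n ↦ (hFint n).aestronglyMeasurable) ?_
  have hlintegral (n : ℕ) : ∫⁻ r in Set.Ioi 0, ‖F n r‖ₑ =
      ENNReal.ofReal (∫ r in Set.Ioi 0, F n r) := by
    rw [ofReal_integral_eq_lintegral_ofReal (hFint n)
      (ae_restrict_of_forall_mem measurableSet_Ioi (hF0 n))]
    exact setLIntegral_congr_fun measurableSet_Ioi fun r hr ↦ Real.enorm_of_nonneg (hF0 n r hr)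
  simp only [hlintegral]
  rw [(ENNReal.tendsto_ofReal ha).liminf_eq]
  exact ENNReal.ofReal_ne_top

lemma tendsto_intervalIntegral_of_le (hFint : ∀ n, IntegrableOn (F n) (Set.Ioi 0))
    (hF0 : ∀ n, ∀ r > 0, 0 ≤ F n r) (hlim : ∀ r > 0, Tendsto (F · r) atTop (𝓝 (f r)))
    {R C : ℝ} (hR : 0 ≤ R) (hC : ∀ᶠ n in atTop, ∀ r ∈ Set.Ioc 0 R, F n r ≤ C) :
    Tendsto (fun n ↦ ∫ r in 0..R, F n r) atTop (𝓝 (∫ r in 0..R, f r)) := by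
  simp only [intervalIntegral.integral_of_le hR]
  refine tendsto_integral_filter_of_dominated_convergence (fun _ ↦ C)
    (.of_forall fun n ↦ ((hFint n).mono_set Set.Ioc_subset_Ioi_self).aestronglyMeasurable) ?_
    (integrable_const C) (ae_restrict_of_forall_mem measurableSet_Ioc fun r hr ↦ hlim r hr.1)
  filter_upwards [hC] with n hn
  refine ae_restrict_of_forall_mem measurableSet_Ioc fun r hr ↦ ?_
  rw [Real.norm_of_nonneg (hF0 n r hr.1)]
  exact hn r hr

/- The hypothesis `r * F n r ≤ G n r` makes the tails of `F n` uniformly small. -/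
lemma integral_eq_of_tendsto_of_mul_le (hFint : ∀ n, IntegrableOn (F n) (Set.Ioi 0))
    (hGint : ∀ n, IntegrableOn (G n) (Set.Ioi 0)) (hF0 : ∀ n, ∀ r > 0, 0 ≤ F n r)
    (hFG : ∀ n, ∀ r > 0, r * F n r ≤ G n r) (hlim : ∀ r > 0, Tendsto (F · r) atTop (𝓝 (f r)))
    (hbdd : ∀ R > 0, ∃ C, ∀ᶠ n in atTop, ∀ r ∈ Set.Ioc 0 R, F n r ≤ C)
    (ha : Tendsto (fun n ↦ ∫ r in Set.Ioi 0, F n r) atTop (𝓝 a))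
    (hb : Tendsto (fun n ↦ ∫ r in Set.Ioi 0, G n r) atTop (𝓝 b)) :
    ∫ r in Set.Ioi 0, f r = a := by
  have hfint := integrableOn_of_tendsto_integral hFint hF0 hlim ha
  have hinterval (R : ℝ) (hR : 0 < R) :
      Tendsto (fun n ↦ ∫ r in 0..R, F n r) atTop (𝓝 (∫ r in 0..R, f r)) := by
    obtain ⟨C, hC⟩ := hbdd R hR
    exact tendsto_intervalIntegral_of_le hFint hF0 hlim hR.le hC
  have hlimR := intervalIntegral_tendsto_integral_Ioi 0 hfint tendsto_id
  refine le_antisymm (le_of_tendsto hlimR ?_) ?_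
  · filter_upwards [eventually_gt_atTop 0] with R hR
    refine le_of_tendsto_of_tendsto' (hinterval R hR) ha fun n ↦ ?_
    rw [intervalIntegral.integral_of_le hR.le]
    exact setIntegral_mono_set (hFint n) (ae_restrict_of_forall_mem measurableSet_Ioi (hF0 n))
      Set.Ioc_subset_Ioi_self.eventuallyLE
  · have hsum := hlimR.add (tendsto_const_nhds (x := b).div_atTop tendsto_id)
    rw [add_zero] at hsum
    refine ge_of_tendsto hsum ?_
    filter_upwards [eventually_gt_atTop 0] with R hR
    exact le_of_tendsto_of_tendsto' ha ((hinterval R hR).add (hb.div_const R)) fun n ↦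
      integral_Ioi_le_intervalIntegral_add_div (hFint n) (hGint n) (hF0 n) (hFG n) hR

end Limits

section NatFloor

variable {φ : ℕ → ℝ} {m : ℕ}

lemma comp_natFloor_eq_sum_indicator (hφ : ∀ j, m ≤ j → φ j = 0) {x : ℝ} (hx : 0 ≤ x) :
    φ ⌊x⌋₊ = ∑ j ∈ Finset.range m, (Set.Ico (j : ℝ) (j + 1)).indicator (fun _ ↦ φ j) x := by
  have hmem (j : ℕ) : x ∈ Set.Ico (j : ℝ) (j + 1) ↔ ⌊x⌋₊ = j := (Nat.floor_eq_iff hx).symm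
  simp only [Set.indicator_apply, hmem, Finset.sum_ite_eq, Finset.mem_range]
  split_ifs with h
  · rfl
  · exact hφ _ (not_lt.1 h)

lemma integrable_indicator_Ico (c x y : ℝ) :
    Integrable ((Set.Ico x y).indicator fun _ ↦ c) :=
  (integrable_indicator_iff measurableSet_Ico).2 (integrableOn_const (by simp))

lemma integrableOn_comp_natFloor (hφ : ∀ j, m ≤ j → φ j = 0) :
    IntegrableOn (fun x : ℝ ↦ φ ⌊x⌋₊) (Set.Ioi 0) := by
  have hsum := integrable_finsetSum (Finset.range m) fun j _ ↦
    integrable_indicator_Ico (φ j) j (j + 1)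
  exact hsum.integrableOn.congr_fun
    (fun _ hx ↦ (comp_natFloor_eq_sum_indicator hφ (le_of_lt hx)).symm) measurableSet_Ioi

lemma integral_comp_natFloor (hφ : ∀ j, m ≤ j → φ j = 0) :
    ∫ x in Set.Ioi (0 : ℝ), φ ⌊x⌋₊ = ∑ j ∈ Finset.range m, φ j := by
  rw [← integral_Ici_eq_integral_Ioi, setIntegral_congr_fun measurableSet_Ici fun x hx ↦
    comp_natFloor_eq_sum_indicator hφ hx,
    integral_finsetSum _ fun j _ ↦ (integrable_indicator_Ico (φ j) j (j + 1)).integrableOn]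
  refine Finset.sum_congr rfl fun j _ ↦ ?_
  have hsub : Set.Ico (j : ℝ) (j + 1) ⊆ Set.Ici 0 := fun x hx ↦
    Set.mem_Ici.2 ((Nat.cast_nonneg j).trans hx.1)
  rw [setIntegral_indicator measurableSet_Ico, Set.inter_eq_right.2 hsub, setIntegral_const]
  simp

lemma integrableOn_comp_natFloor_mul (hφ : ∀ j, m ≤ j → φ j = 0) {N : ℝ} (hN : 0 < N) :
    IntegrableOn (fun r ↦ φ ⌊r * N⌋₊) (Set.Ioi 0) := by
  refine (integrableOn_Ioi_comp_mul_right_iff (fun x ↦ φ ⌊x⌋₊) 0 hN).2 ?_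
  rw [zero_mul]
  exact integrableOn_comp_natFloor hφ

lemma integral_comp_natFloor_mul (hφ : ∀ j, m ≤ j → φ j = 0) {N : ℝ} (hN : 0 < N) :
    ∫ r in Set.Ioi 0, φ ⌊r * N⌋₊ = N⁻¹ * ∑ j ∈ Finset.range m, φ j := by
  rw [integral_comp_mul_right_Ioi (fun x ↦ φ ⌊x⌋₊) 0 hN, zero_mul, integral_comp_natFloor hφ,
    smul_eq_mul]

end NatFloor

section RisingMoments

variable {α r R N : ℝ} {n : ℕ}

lemma pow_le_ascFactorial_floor_div_pow (hr : 0 ≤ r) (hN : 0 < N) (k : ℕ) :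
    r ^ k ≤ (⌊r * N⌋₊ + 1).ascFactorial k / N ^ k := by
  rw [le_div_iff₀ (by positivity), ← mul_pow]
  calc (r * N) ^ k ≤ ((⌊r * N⌋₊ + 1 : ℕ) : ℝ) ^ k := by
        gcongr
        exact_mod_cast (Nat.lt_floor_add_one (r * N)).le
    _ ≤ (⌊r * N⌋₊ + 1).ascFactorial k := by exact_mod_cast Nat.pow_succ_le_ascFactorial _ k

lemma ascFactorial_floor_div_pow_le (hr : 0 ≤ r) (hN : 0 < N) (k : ℕ) :
    (⌊r * N⌋₊ + 1).ascFactorial k / N ^ k ≤ (r + k / N) ^ k := by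
  rw [div_le_iff₀ (by positivity), ← mul_pow]
  calc ((⌊r * N⌋₊ + 1).ascFactorial k : ℝ) ≤ ((⌊r * N⌋₊ : ℝ) + k) ^ k := by
        exact_mod_cast Nat.ascFactorial_le_pow_add _ k
    _ ≤ (r * N + k) ^ k := by
        gcongr
        exact Nat.floor_le (by positivity)
    _ = ((r + k / N) * N) ^ k := by field_simp

lemma tendsto_ascFactorial_floor_div_pow (hr : 0 ≤ r) (k : ℕ) :
    Tendsto (fun N : ℝ ↦ (⌊r * N⌋₊ + 1).ascFactorial k / N ^ k) atTop (𝓝 (r ^ k)) := by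
  have hupper : Tendsto (fun N : ℝ ↦ (r + k / N) ^ k) atTop (𝓝 ((r + 0) ^ k)) :=
    ((tendsto_const_nhds.div_atTop tendsto_id).const_add r).pow k
  rw [add_zero] at hupper
  refine tendsto_of_tendsto_of_tendsto_of_le_of_le' tendsto_const_nhds hupper ?_ ?_
  · filter_upwards [eventually_gt_atTop 0] with N hN
    exact pow_le_ascFactorial_floor_div_pow hr hN k
  · filter_upwards [eventually_gt_atTop 0] with N hN
    exact ascFactorial_floor_div_pow_le hr hN k

/-- The integrand of the `k`-th rising factorial moment of the approximation `renewalDensity α n` to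
`mainardi α`. Rising factorials are used because their expectations under `renewalProb` are
explicit. -/
noncomputable def risingMomentDensity (α : ℝ) (k n : ℕ) (r : ℝ) : ℝ :=
  (⌊r * (n : ℝ) ^ α⌋₊ + 1).ascFactorial k / ((n : ℝ) ^ α) ^ k * renewalDensity α n r

lemma risingMomentDensity_nonneg (h0 : 0 ≤ α) (h1 : α ≤ 1) (k n : ℕ) (r : ℝ) :
    0 ≤ risingMomentDensity α k n r :=
  mul_nonneg (by positivity) (renewalDensity_nonneg h0 h1 n r)

lemma mul_risingMomentDensity_le (h0 : 0 ≤ α) (h1 : α ≤ 1) (hn : n ≠ 0) (k : ℕ) (r : ℝ) :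
    r * risingMomentDensity α k n r ≤ risingMomentDensity α (k + 1) n r := by
  have hN : 0 < (n : ℝ) ^ α := by positivity
  have hr : r ≤ (⌊r * (n : ℝ) ^ α⌋₊ + 1 + k : ℕ) / (n : ℝ) ^ α := by
    rw [le_div_iff₀ hN]
    push_cast
    linarith [Nat.lt_floor_add_one (r * (n : ℝ) ^ α), (Nat.cast_nonneg k : (0 : ℝ) ≤ k)]
  calc r * risingMomentDensity α k n r
      ≤ (⌊r * (n : ℝ) ^ α⌋₊ + 1 + k : ℕ) / (n : ℝ) ^ α * risingMomentDensity α k n r :=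
        mul_le_mul_of_nonneg_right hr (risingMomentDensity_nonneg h0 h1 k n r)
    _ = risingMomentDensity α (k + 1) n r := by
        rw [risingMomentDensity, risingMomentDensity, Nat.ascFactorial_succ, Nat.cast_mul, pow_succ]
        field_simp

lemma risingMomentDensity_le (h0 : 0 < α) (h1 : α < 1) (k : ℕ) (hn : n ≠ 0) (hr : 0 ≤ r)
    (hrR : r ≤ R) :
    risingMomentDensity α k n r ≤ (R + k) ^ k * ∑' i, renewalMajorant α R i := by
  have hN : 1 ≤ (n : ℝ) ^ α := one_le_rpow (by exact_mod_cast Nat.one_le_iff_ne_zero.2 hn) h0.le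
  have hR : 0 ≤ R := hr.trans hrR
  refine mul_le_mul ?_ (renewalDensity_le h0 h1 hn hr hrR) (renewalDensity_nonneg h0.le h1.le n r)
    (by positivity)
  refine (ascFactorial_floor_div_pow_le hr (one_pos.trans_le hN) k).trans ?_
  gcongr
  exact div_le_self (by positivity) hN

lemma tendsto_risingMomentDensity (h0 : 0 < α) (h1 : α < 1) (k : ℕ) (hr : 0 < r) :
    Tendsto (fun n ↦ risingMomentDensity α k n r) atTop (𝓝 (r ^ k * mainardi α r)) :=
  ((tendsto_ascFactorial_floor_div_pow hr.le k).comp (tendsto_natCast_rpow_atTop h0)).mul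
    (tendsto_renewalDensity h0 h1 hr)

lemma risingMomentDensity_eq (α : ℝ) (k n : ℕ) (r : ℝ) :
    risingMomentDensity α k n r = (n : ℝ) ^ α / ((n : ℝ) ^ α) ^ k *
      ((⌊r * (n : ℝ) ^ α⌋₊ + 1).ascFactorial k * renewalProb α n ⌊r * (n : ℝ) ^ α⌋₊) := by
  rw [risingMomentDensity, renewalDensity]
  ring

lemma ascFactorial_mul_renewalProb_eq_zero (α : ℝ) (k : ℕ) {j : ℕ} (hj : n + 1 ≤ j) :
    ((j + 1).ascFactorial k : ℝ) * renewalProb α n j = 0 := by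
  rw [renewalProb_eq_zero_of_lt α hj, mul_zero]

lemma integrableOn_risingMomentDensity (α : ℝ) (k : ℕ) (hn : n ≠ 0) :
    IntegrableOn (risingMomentDensity α k n) (Set.Ioi 0) := by
  rw [funext (risingMomentDensity_eq α k n)]
  exact (integrableOn_comp_natFloor_mul (fun _ ↦ ascFactorial_mul_renewalProb_eq_zero α k)
    (by positivity)).const_mul _

lemma integral_risingMomentDensity (α : ℝ) (k : ℕ) (hn : n ≠ 0) :
    ∫ r in Set.Ioi 0, risingMomentDensity α k n r =
      k.factorial * ((n : ℝ) ^ (-(α * k)) * PowerSeries.coeff n (oneSubPow (-(α * k + 1)))) := by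
  have hN : 0 < (n : ℝ) ^ α := by positivity
  have hpow : (n : ℝ) ^ (-(α * k)) = (((n : ℝ) ^ α) ^ k)⁻¹ := by
    rw [rpow_neg (by positivity), rpow_mul (by positivity), rpow_natCast]
  have hsum : ∑ j ∈ Finset.range (n + 1), ((j + 1).ascFactorial k : ℝ) * renewalProb α n j =
      k.factorial * PowerSeries.coeff n (oneSubPow (-(α * k + 1))) := by
    rw [← sum_choose_mul_renewalProb, Finset.mul_sum]
    refine Finset.sum_congr rfl fun j _ ↦ ?_
    rw [Nat.ascFactorial_eq_factorial_mul_choose, Nat.cast_mul, add_comm j k, mul_assoc]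
  simp only [risingMomentDensity_eq]
  rw [integral_const_mul, integral_comp_natFloor_mul
    (fun _ ↦ ascFactorial_mul_renewalProb_eq_zero α k) hN, hsum, hpow]
  field_simp

lemma tendsto_integral_risingMomentDensity (α : ℝ) (k : ℕ) :
    Tendsto (fun n ↦ ∫ r in Set.Ioi 0, risingMomentDensity α k n r) atTop
      (𝓝 (k.factorial / Gamma (α * k + 1))) := by
  have h := (tendsto_rpow_mul_coeff_oneSubPow (-(α * k + 1))).const_mul (k.factorial : ℝ)
  rw [neg_neg, mul_one_div] at h
  refine h.congr' ?_
  filter_upwards [eventually_ne_atTop 0] with n hn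
  rw [integral_risingMomentDensity α k hn]
  ring_nf

lemma integrableOn_pow_mul_mainardi (h0 : 0 < α) (h1 : α < 1) (k : ℕ) :
    IntegrableOn (fun r ↦ r ^ k * mainardi α r) (Set.Ioi 0) :=
  integrableOn_of_tendsto_integral
    (fun n ↦ integrableOn_risingMomentDensity α k n.succ_ne_zero)
    (fun n r _ ↦ risingMomentDensity_nonneg h0.le h1.le k (n + 1) r)
    (fun _ hr ↦ (tendsto_risingMomentDensity h0 h1 k hr).comp (tendsto_add_atTop_nat 1))
    ((tendsto_integral_risingMomentDensity α k).comp (tendsto_add_atTop_nat 1))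

lemma integral_pow_mul_mainardi (h0 : 0 < α) (h1 : α < 1) (k : ℕ) :
    ∫ r in Set.Ioi 0, r ^ k * mainardi α r = k.factorial / Gamma (α * k + 1) :=
  integral_eq_of_tendsto_of_mul_le
    (fun n ↦ integrableOn_risingMomentDensity α k n.succ_ne_zero)
    (fun n ↦ integrableOn_risingMomentDensity α (k + 1) n.succ_ne_zero)
    (fun n r _ ↦ risingMomentDensity_nonneg h0.le h1.le k (n + 1) r)
    (fun n r _ ↦ mul_risingMomentDensity_le h0.le h1.le n.succ_ne_zero k r)
    (fun _ hr ↦ (tendsto_risingMomentDensity h0 h1 k hr).comp (tendsto_add_atTop_nat 1))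
    (fun _ _ ↦ ⟨_, .of_forall fun n _ hr ↦
      risingMomentDensity_le h0 h1 k n.succ_ne_zero hr.1.le hr.2⟩)
    ((tendsto_integral_risingMomentDensity α k).comp (tendsto_add_atTop_nat 1))
    ((tendsto_integral_risingMomentDensity α (k + 1)).comp (tendsto_add_atTop_nat 1))

end RisingMoments

section MittagLeffler

variable {α p x z : ℝ}

lemma rpow_mul_exp_neg_le_Gamma (hp : 0 ≤ p) (hx : 0 ≤ x) :
    x ^ p * exp (-x) ≤ Real.Gamma (p + 1) := by
  have hGamma : IntegrableOn (fun t ↦ exp (-t) * t ^ p) (Set.Ioi 0) := by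
    simpa only [add_sub_cancel_right] using Real.GammaIntegral_convergent (s := p + 1) (by linarith)
  have hsub : Set.Ioi x ⊆ Set.Ioi (0 : ℝ) := Set.Ioi_subset_Ioi hx
  calc x ^ p * exp (-x) = ∫ t in Set.Ioi x, x ^ p * exp (-t) := by
        rw [integral_const_mul, integral_exp_neg_Ioi]
    _ ≤ ∫ t in Set.Ioi x, exp (-t) * t ^ p := by
        refine setIntegral_mono_on ((integrableOn_exp_neg_Ioi x).const_mul _)
          (hGamma.mono_set hsub) measurableSet_Ioi fun t ht ↦ ?_
        rw [mul_comm]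
        gcongr
        exact le_of_lt ht
    _ ≤ ∫ t in Set.Ioi 0, exp (-t) * t ^ p :=
        setIntegral_mono_set hGamma (ae_restrict_of_forall_mem measurableSet_Ioi fun t ht ↦
          mul_nonneg (exp_pos _).le (rpow_nonneg (le_of_lt ht) _)) hsub.eventuallyLE
    _ = Real.Gamma (p + 1) := by
        rw [Real.Gamma_eq_integral (by linarith), add_sub_cancel_right]

lemma rpow_le_Gamma_mul_exp (hp : 0 ≤ p) (hx : 0 ≤ x) : x ^ p ≤ Real.Gamma (p + 1) * exp x := by
  rw [← div_le_iff₀ (exp_pos x), div_eq_mul_inv, ← exp_neg]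
  exact rpow_mul_exp_neg_le_Gamma hp hx

lemma exists_rpow_le_mul_exp (hp : 0 ≤ p) {ε : ℝ} (hε : 0 < ε) :
    ∃ C > 0, ∀ x ≥ 0, x ^ p ≤ C * exp (ε * x) := by
  refine ⟨Real.Gamma (p + 1) / ε ^ p,
    div_pos (Real.Gamma_pos_of_pos (by linarith)) (by positivity), fun x hx ↦ ?_⟩
  rw [div_mul_eq_mul_div, le_div_iff₀' (by positivity), ← mul_rpow hε.le hx]
  exact rpow_le_Gamma_mul_exp hp (by positivity)

/-- The one-parameter Mittag-Leffler function `E_α`, the exponential moment generating function of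
`mainardi α` (see `integral_exp_mul_mainardi`). -/
noncomputable def mittagLeffler (α z : ℝ) : ℝ := ∑' k : ℕ, z ^ k / Real.Gamma (α * k + 1)

lemma pow_div_Gamma_nonneg (hα : 0 ≤ α) (hz : 0 ≤ z) (k : ℕ) :
    0 ≤ z ^ k / Real.Gamma (α * k + 1) :=
  div_nonneg (by positivity) (Real.Gamma_pos_of_pos (by positivity)).le

lemma summable_pow_div_Gamma (hα : 0 < α) (hz : 0 ≤ z) :
    Summable fun k : ℕ ↦ z ^ k / Real.Gamma (α * k + 1) := by
  set x := (2 * z) ^ α⁻¹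
  refine .of_nonneg_of_le (pow_div_Gamma_nonneg hα.le hz) (fun k ↦ ?_)
    (summable_geometric_two.mul_left (exp x))
  have hpow : x ^ (α * k) = (2 * z) ^ k := by
    rw [← rpow_mul (by positivity), inv_mul_cancel_left₀ hα.ne', rpow_natCast]
  have hle := rpow_le_Gamma_mul_exp (p := α * k) (x := x) (by positivity) (by positivity)
  rw [hpow, mul_pow] at hle
  rw [div_le_iff₀ (Real.Gamma_pos_of_pos (by positivity)), one_div_pow, mul_one_div,
    div_mul_eq_mul_div, le_div_iff₀' (by positivity)]
  linarith

lemma hasSum_pow_div_factorial (y : ℝ) : HasSum (fun k : ℕ ↦ y ^ k / k.factorial) (exp y) := by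
  rw [Real.exp_eq_exp_ℝ]
  exact NormedSpace.expSeries_div_hasSum_exp y

lemma tendsto_sum_exp_mul_mainardi (α z r : ℝ) :
    Tendsto (fun n ↦ ∑ k ∈ Finset.range n, z ^ k / k.factorial * (r ^ k * mainardi α r)) atTop
      (𝓝 (exp (z * r) * mainardi α r)) := by
  refine ((hasSum_pow_div_factorial (z * r)).mul_right (mainardi α r)).tendsto_sum_nat.congr
    fun n ↦ Finset.sum_congr rfl fun k _ ↦ ?_
  rw [mul_pow]
  ring

lemma integrableOn_sum_exp_mul_mainardi (h0 : 0 < α) (h1 : α < 1) (z : ℝ) (n : ℕ) :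
    IntegrableOn (fun r ↦ ∑ k ∈ Finset.range n, z ^ k / k.factorial * (r ^ k * mainardi α r))
      (Set.Ioi 0) :=
  integrable_finsetSum _ fun k _ ↦ (integrableOn_pow_mul_mainardi h0 h1 k).const_mul _

lemma tendsto_integral_sum_exp_mul_mainardi (h0 : 0 < α) (h1 : α < 1) (hz : 0 ≤ z) :
    Tendsto (fun n ↦ ∫ r in Set.Ioi 0,
      ∑ k ∈ Finset.range n, z ^ k / k.factorial * (r ^ k * mainardi α r)) atTop
      (𝓝 (mittagLeffler α z)) := by
  refine (summable_pow_div_Gamma h0 hz).hasSum.tendsto_sum_nat.congr fun n ↦ ?_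
  rw [integral_finsetSum _ fun k _ ↦ (integrableOn_pow_mul_mainardi h0 h1 k).const_mul _]
  refine Finset.sum_congr rfl fun k _ ↦ ?_
  rw [integral_const_mul, integral_pow_mul_mainardi h0 h1]
  field_simp

lemma integrableOn_exp_mul_mainardi (h0 : 0 < α) (h1 : α < 1) (hz : 0 ≤ z) :
    IntegrableOn (fun r ↦ exp (z * r) * mainardi α r) (Set.Ioi 0) := by
  refine integrableOn_of_tendsto_integral (integrableOn_sum_exp_mul_mainardi h0 h1 z)
    (fun n r hr ↦ Finset.sum_nonneg fun k _ ↦ ?_)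
    (fun r _ ↦ tendsto_sum_exp_mul_mainardi α z r) (tendsto_integral_sum_exp_mul_mainardi h0 h1 hz)
  have := mainardi_nonneg h0 h1 hr
  positivity

lemma integral_exp_mul_mainardi (h0 : 0 < α) (h1 : α < 1) (hz : 0 ≤ z) :
    ∫ r in Set.Ioi 0, exp (z * r) * mainardi α r = mittagLeffler α z := by
  refine tendsto_nhds_unique (integral_tendsto_of_tendsto_of_monotone
    (integrableOn_sum_exp_mul_mainardi h0 h1 z) (integrableOn_exp_mul_mainardi h0 h1 hz)
    (ae_restrict_of_forall_mem measurableSet_Ioi fun r hr ↦ ?_)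
    (.of_forall fun r ↦ tendsto_sum_exp_mul_mainardi α z r))
    (tendsto_integral_sum_exp_mul_mainardi h0 h1 hz)
  refine monotone_nat_of_le_succ fun n ↦ ?_
  have hr0 : 0 < r := hr
  have := mainardi_nonneg h0 h1 hr
  rw [Finset.sum_range_succ]
  exact le_add_of_nonneg_right (by positivity)

lemma Gamma_mul_natCeil_div_le (h0 : 0 < α) (h1 : α ≤ 1) (K : ℕ) :
    Real.Gamma (α * ⌈K / α⌉₊ + 1) ≤ (K + 1).factorial := by
  rcases Nat.eq_zero_or_pos K with rfl | hK
  · simp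
  have hK' : (1 : ℝ) ≤ K := by exact_mod_cast hK
  have hlower : (K : ℝ) ≤ α * ⌈K / α⌉₊ := (div_le_iff₀' h0).1 (Nat.le_ceil _)
  have hupper : α * ⌈K / α⌉₊ ≤ K + 1 := by
    calc α * ⌈K / α⌉₊ ≤ α * (K / α + 1) := by gcongr; exact (Nat.ceil_lt_add_one (by positivity)).le
      _ = K + α := by field_simp
      _ ≤ K + 1 := by gcongr
  rw [← Real.Gamma_nat_eq_factorial]
  refine Real.Gamma_strictMonoOn_Ici.monotoneOn (Set.mem_Ici.2 ?_) (Set.mem_Ici.2 ?_) ?_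
  all_goals push_cast; linarith

lemma natCeil_div_injective (h0 : 0 < α) (h1 : α ≤ 1) :
    Function.Injective fun K : ℕ ↦ ⌈K / α⌉₊ := by
  refine StrictMono.injective (strictMono_nat_of_lt_succ fun K ↦ Nat.lt_ceil.2 ?_)
  calc (⌈K / α⌉₊ : ℝ) < K / α + 1 := Nat.ceil_lt_add_one (by positivity)
    _ ≤ K / α + 1 / α := by gcongr; exact (one_le_div h0).2 h1
    _ = (K + 1 : ℕ) / α := by push_cast; ring

/- The terms of `E_α(T ^ α)` with index `⌈K / α⌉₊` alone dominate the series of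
`(exp T - 1) / T = ∑ T ^ K / (K + 1)!`. -/
lemma exp_le_one_add_mul_mittagLeffler (h0 : 0 < α) (h1 : α ≤ 1) {T : ℝ} (hT : 1 ≤ T) :
    exp T ≤ 1 + T * mittagLeffler α (T ^ α) := by
  have hexp : HasSum (fun K : ℕ ↦ T * (T ^ K / (K + 1).factorial)) (exp T - 1) := by
    simpa [pow_succ', mul_div_assoc] using (hasSum_nat_add_iff' 1).2 (hasSum_pow_div_factorial T)
  have hterm (K : ℕ) : T ^ K / (K + 1).factorial ≤
      (T ^ α) ^ ⌈K / α⌉₊ / Real.Gamma (α * ⌈K / α⌉₊ + 1) := by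
    rw [← rpow_mul_natCast (by positivity), ← rpow_natCast]
    have := Real.Gamma_pos_of_pos (show 0 < α * ⌈K / α⌉₊ + 1 by positivity)
    gcongr
    · exact (div_le_iff₀' h0).1 (Nat.le_ceil _)
    · exact Gamma_mul_natCeil_div_le h0 h1 K
  have hsum := summable_pow_div_Gamma h0 (rpow_nonneg (zero_le_one.trans hT) α)
  have hsub := hsum.comp_injective (natCeil_div_injective h0 h1)
  have hle : exp T - 1 ≤ T * mittagLeffler α (T ^ α) := by
    calc exp T - 1
        ≤ T * ∑' K : ℕ, (T ^ α) ^ ⌈K / α⌉₊ / Real.Gamma (α * ⌈K / α⌉₊ + 1) :=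
          hasSum_le (fun K ↦ by gcongr; exact hterm K) hexp (hsub.hasSum.mul_left T)
      _ ≤ T * mittagLeffler α (T ^ α) := by
          gcongr
          exact tsum_comp_le_tsum_of_inj hsum (pow_div_Gamma_nonneg h0.le (by positivity))
            (natCeil_div_injective h0 h1)
  linarith

end MittagLeffler

section FundSol

variable {α A ρ s t : ℝ} {d : ℕ}

/-- The heat kernel of `ℝ^d` at time `s` and distance `ρ` from the origin. -/
noncomputable def heatKernel (d : ℕ) (s ρ : ℝ) : ℝ :=
  exp (-ρ ^ 2 / (4 * s)) / (4 * π * s) ^ ((d : ℝ) / 2)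

lemma heatKernel_nonneg (hs : 0 ≤ s) (d : ℕ) (ρ : ℝ) : 0 ≤ heatKernel d s ρ := by
  unfold heatKernel
  positivity

lemma exists_heatKernel_le (d : ℕ) (hρ : 0 < ρ) : ∃ C, ∀ s > 0, heatKernel d s ρ ≤ C := by
  obtain ⟨C, -, hC⟩ := exists_rpow_le_mul_exp (p := d / 2) (ε := ρ ^ 2 * π) (by positivity)
    (by positivity)
  refine ⟨C, fun s hs ↦ ?_⟩
  calc heatKernel d s ρ = ((4 * π * s)⁻¹) ^ ((d : ℝ) / 2) * exp (-ρ ^ 2 / (4 * s)) := by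
        rw [heatKernel, inv_rpow (by positivity), div_eq_inv_mul]
    _ ≤ C * exp (ρ ^ 2 * π * (4 * π * s)⁻¹) * exp (-ρ ^ 2 / (4 * s)) := by
        gcongr
        exact hC _ (by positivity)
    _ = C := by
        have hexponent : ρ ^ 2 * π * (4 * π * s)⁻¹ + -ρ ^ 2 / (4 * s) = 0 := by
          field_simp
          ring
        rw [mul_assoc, ← exp_add, hexponent, exp_zero, mul_one]

lemma exists_mul_exp_sub_one_le_exp_mul_heatKernel (d : ℕ) (hA : A < 1) :
    ∃ C > 0, ∀ ρ ≥ 0, ∀ s > 0,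
      C * (exp (-ρ) * exp (A * s) - 1) ≤ exp s * heatKernel d s (2 * ρ) := by
  obtain ⟨C, hC, hpow⟩ := exists_rpow_le_mul_exp (p := d / 2) (ε := (1 - A) / (4 * π))
    (by positivity) (div_pos (by linarith) (by positivity))
  refine ⟨C⁻¹, by positivity, fun ρ hρ s hs ↦ ?_⟩
  have hkernel : 0 ≤ exp s * heatKernel d s (2 * ρ) :=
    mul_nonneg (exp_pos s).le (heatKernel_nonneg hs.le d _)
  rcases lt_or_ge s ρ with hlt | hge
  · have hexp : exp (-ρ) * exp (A * s) ≤ 1 := by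
      rw [← exp_add, exp_le_one_iff]
      nlinarith
    exact (mul_nonpos_of_nonneg_of_nonpos (by positivity) (by linarith)).trans hkernel
  · have hgauss : -ρ ≤ -(2 * ρ) ^ 2 / (4 * s) := by
      rw [le_div_iff₀ (by positivity)]
      nlinarith
    have hfactor : (4 * π * s) ^ ((d : ℝ) / 2) * exp (A * s) ≤ C * exp s := by
      calc (4 * π * s) ^ ((d : ℝ) / 2) * exp (A * s)
          ≤ C * exp ((1 - A) / (4 * π) * (4 * π * s)) * exp (A * s) := by
            gcongr
            exact hpow _ (by positivity)
        _ = C * exp s := by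
            rw [mul_assoc, ← exp_add]
            field_simp
            ring_nf
    calc C⁻¹ * (exp (-ρ) * exp (A * s) - 1)
        ≤ exp (-ρ) * (exp (A * s) / C) := by
          rw [mul_sub, mul_one, div_eq_inv_mul, mul_left_comm]
          exact sub_le_self _ (by positivity)
      _ ≤ exp (-(2 * ρ) ^ 2 / (4 * s)) * (exp s / (4 * π * s) ^ ((d : ℝ) / 2)) := by
          gcongr ?_ * ?_
          · exact exp_le_exp.2 hgauss
          · rwa [div_le_div_iff₀ hC (by positivity), mul_comm, mul_comm (exp s)]
      _ = exp s * heatKernel d s (2 * ρ) := by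
          rw [heatKernel]
          ring

lemma fundSol_eq (α : ℝ) (ht : 0 < t) (x : EuclideanSpace ℝ (Fin d)) :
    fundSol α d t x = ∫ r in Set.Ioi 0,
      exp (t ^ α * r) * heatKernel d (t ^ α * r) ‖x‖ * mainardi α r := by
  have hscale := integral_comp_mul_left_Ioi
    (fun r ↦ exp (t ^ α * r) * heatKernel d (t ^ α * r) ‖x‖ * mainardi α r) 0
    (show 0 < t ^ (-α) by positivity)
  have hcancel (s : ℝ) : t ^ α * (t ^ (-α) * s) = s := by
    rw [← mul_assoc, ← rpow_add ht, add_neg_cancel, rpow_zero, one_mul]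
  rw [mul_zero, smul_eq_mul, eq_inv_mul_iff_mul_eq₀ (by positivity)] at hscale
  simp only [hcancel] at hscale
  exact hscale

lemma integrableOn_exp_mul_heatKernel_mul_mainardi (h0 : 0 < α) (h1 : α < 1) {z : ℝ} (hz : 0 < z)
    (d : ℕ) (hρ : 0 < ρ) :
    IntegrableOn (fun r ↦ exp (z * r) * heatKernel d (z * r) ρ * mainardi α r) (Set.Ioi 0) := by
  obtain ⟨C, hC⟩ := exists_heatKernel_le d hρ
  have hmeas : Measurable fun r ↦ heatKernel d (z * r) ρ := by
    unfold heatKernel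
    fun_prop
  have hbdd := (integrableOn_exp_mul_mainardi h0 h1 hz.le).bdd_mul (c := C)
    hmeas.aestronglyMeasurable (ae_restrict_of_forall_mem measurableSet_Ioi fun r hr ↦ by
      have hzr : 0 < z * r := mul_pos hz hr
      rw [Real.norm_of_nonneg (heatKernel_nonneg hzr.le d ρ)]
      exact hC _ hzr)
  exact hbdd.congr (.of_forall fun r ↦ by ring)

lemma integral_mainardi (h0 : 0 < α) (h1 : α < 1) : ∫ r in Set.Ioi 0, mainardi α r = 1 := by
  simpa using integral_pow_mul_mainardi h0 h1 0

lemma exists_mul_mittagLeffler_sub_one_le_fundSol (h0 : 0 < α) (h1 : α < 1) (d : ℕ) (hA0 : 0 ≤ A)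
    (hA1 : A < 1) :
    ∃ C > 0, ∀ t > 0, ∀ x : EuclideanSpace ℝ (Fin d), x ≠ 0 →
      C * (exp (-(‖x‖ / 2)) * mittagLeffler α (A * t ^ α) - 1) ≤ fundSol α d t x := by
  obtain ⟨C, hC, hlower⟩ := exists_mul_exp_sub_one_le_exp_mul_heatKernel d hA1
  refine ⟨C, hC, fun t ht x hx ↦ ?_⟩
  have hmass : IntegrableOn (mainardi α) (Set.Ioi 0) := by
    simpa using integrableOn_pow_mul_mainardi h0 h1 0
  have hlaplace := (integrableOn_exp_mul_mainardi h0 h1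
    (show 0 ≤ A * t ^ α by positivity)).const_mul (exp (-(‖x‖ / 2)))
  rw [fundSol_eq α ht]
  calc C * (exp (-(‖x‖ / 2)) * mittagLeffler α (A * t ^ α) - 1)
      = ∫ r in Set.Ioi 0, C * (exp (-(‖x‖ / 2)) * (exp (A * t ^ α * r) * mainardi α r)
          - mainardi α r) := by
        rw [integral_const_mul, integral_sub hlaplace hmass, integral_const_mul,
          integral_exp_mul_mainardi h0 h1 (by positivity), integral_mainardi h0 h1]
    _ ≤ ∫ r in Set.Ioi 0, exp (t ^ α * r) * heatKernel d (t ^ α * r) ‖x‖ * mainardi α r := by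
        refine setIntegral_mono_on ((hlaplace.sub hmass).const_mul C)
          (integrableOn_exp_mul_heatKernel_mul_mainardi h0 h1 (by positivity) d
            (norm_pos_iff.2 hx)) measurableSet_Ioi fun r hr ↦ ?_
        have hpoint := mul_le_mul_of_nonneg_right
          (hlower (‖x‖ / 2) (by positivity) (t ^ α * r) (mul_pos (by positivity) hr))
          (mainardi_nonneg h0 h1 hr)
        rw [mul_div_cancel₀ _ two_ne_zero, ← mul_assoc A] at hpoint
        convert hpoint using 1
        ring

lemma tendsto_exp_neg_mul_mittagLeffler_atTop (h0 : 0 < α) (h1 : α ≤ 1) {q : ℝ} (hρ : 0 ≤ ρ)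
    (hq : ρ < q) :
    Tendsto (fun t ↦ exp (-(ρ * t)) * mittagLeffler α ((q * t) ^ α)) atTop atTop := by
  have hq0 : 0 < q := hρ.trans_lt hq
  have hgrow : Tendsto (fun t ↦ q⁻¹ * (exp ((q - ρ) * t) / t - 1)) atTop atTop := by
    refine (tendsto_atTop_add_const_right _ (-1) ?_).const_mul_atTop (inv_pos.2 hq0)
    simpa using tendsto_exp_mul_div_rpow_atTop 1 (q - ρ) (sub_pos.2 hq)
  refine tendsto_atTop_mono' _ ?_ hgrow
  filter_upwards [eventually_ge_atTop 1, eventually_ge_atTop q⁻¹] with t ht1 htq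
  have hqt : 1 ≤ q * t := (inv_le_iff_one_le_mul₀' hq0).1 htq
  have hdecay : exp (-(ρ * t)) ≤ 1 := exp_le_one_iff.2 (by nlinarith)
  have hexp : exp ((q - ρ) * t) = exp (-(ρ * t)) * exp (q * t) := by
    rw [← exp_add]
    ring_nf
  calc q⁻¹ * (exp ((q - ρ) * t) / t - 1)
      ≤ q⁻¹ * (exp (-(ρ * t)) * (exp (q * t) - 1) / t) := by
        gcongr
        rw [hexp, mul_sub, mul_one, sub_div]
        have : exp (-(ρ * t)) / t ≤ 1 := (div_le_one (by linarith)).2 (hdecay.trans ht1)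
        linarith
    _ ≤ q⁻¹ * (exp (-(ρ * t)) * (q * t * mittagLeffler α ((q * t) ^ α)) / t) := by
        gcongr
        linarith [exp_le_one_add_mul_mittagLeffler h0 h1 hqt]
    _ = exp (-(ρ * t)) * mittagLeffler α ((q * t) ^ α) := by field_simp

end FundSol

lemma gammaAlpha_nonneg {α : ℝ} (h0 : 0 ≤ α) (h1 : α ≤ 1) : 0 ≤ gammaAlpha α :=
  mul_nonneg (sub_nonneg.2 h1) (rpow_nonneg h0 _)

theorem stmt2_general (d : ℕ) (α m : ℝ) (hα : α ∈ Set.Ioo (0 : ℝ) 1) (hm0 : 0 < m) (hm : m < 2)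
    (v : EuclideanSpace ℝ (Fin d)) (hv : ‖v‖ = 1) :
    Tendsto (fun t : ℝ ↦ fundSol α d t ((m * t) • v)) atTop atTop := by
  obtain ⟨h0, h1⟩ := hα
  obtain ⟨q, hmq, hq1⟩ := exists_between (show m / 2 < 1 by linarith)
  have hq0 : 0 < q := by linarith
  obtain ⟨C, hC, hlower⟩ := exists_mul_mittagLeffler_sub_one_le_fundSol h0 h1 d
    (A := q ^ α) (by positivity) (rpow_lt_one hq0.le hq1 h0)
  refine tendsto_atTop_mono' _ ?_ ((tendsto_atTop_add_const_right _ (-1)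
    (tendsto_exp_neg_mul_mittagLeffler_atTop h0 h1.le (by positivity) hmq)).const_mul_atTop hC)
  filter_upwards [eventually_gt_atTop 0] with t ht
  have hnorm : ‖(m * t) • v‖ = m * t := by
    rw [norm_smul, hv, mul_one, Real.norm_of_nonneg (by positivity)]
  have hx : (m * t) • v ≠ 0 := norm_pos_iff.1 (hnorm.symm ▸ mul_pos hm0 ht)
  have hbound := hlower t ht _ hx
  rwa [hnorm, ← mul_rpow hq0.le ht.le, mul_div_right_comm, sub_eq_add_neg] at hbound

theorem stmt2 (d : ℕ) (hd : 1 ≤ d) (α m : ℝ) (hα : α ∈ Set.Ioo (0 : ℝ) 1)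
    (hm0 : 0 < m) (hm : m < 2 * Real.sqrt (1 - gammaAlpha α))
    (v : EuclideanSpace ℝ (Fin d)) (hv : ‖v‖ = 1) :
    Tendsto (fun t : ℝ => fundSol α d t ((m * t) • v)) atTop atTop := by
  have hsqrt : √(1 - gammaAlpha α) ≤ 1 :=
    Real.sqrt_le_one.2 (sub_le_self 1 (gammaAlpha_nonneg hα.1.le hα.2.le))
  exact stmt2_general d α m hα hm0 (by linarith) v hv
end

section
/- Let d ≥ 1 be an integer, α ∈ (0,1), and let v ∈ ℝ^d be a unit vector. Let M_α be the least natural number n satisfying n > (2/γ_α)^{(1-α)/α}. If m > 2 M_α √(1 − γ_α/M_α), then u_{α,1}(t, m t v) → 0 as t → ∞. -/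
open Real MeasureTheory Filter Topology

/-- `M_α` is the least natural number `n` with `n > (2/γ_α)^{(1-α)/α}`. -/
noncomputable def Malpha (α : ℝ) : ℕ :=
  sInf {n : ℕ | (2 / gammaAlpha α) ^ ((1 - α) / α) < (n : ℝ)}

/-!
By the reflection formula the Wright series is a Hankel contour integral of `e^{s - z s^α} s^{ν-1}`.
Deform the contour into the arc through the saddle point, of radius `b = (α z)^{1/(1-α)}`, and the
rays of argument `±π / (1 + α)`. Up to powers of `b` the integrand is at most `e^{-(1/α - 1) b}`
there, and `(1/α - 1) b = γ_α z^{1/(1-α)}`; so `W_{-α,μ}(-z)` is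
`O(e^{-(1-δ) γ_α z^{1/(1-α)}})` for every `δ > 0`.

In the subordination integral, Young's inequality replaces `γ_α (t^{-α} s)^{1/(1-α)}` by its tangent
`s b^α - b t`, and the AM-GM inequality gives `(b^α - 1) s + ‖x‖² / (4 s) ≥ ‖x‖ √(b^α - 1)`. Hence
the solution decays exponentially where `‖x‖ ≥ m t`, as soon as `m > b / √(b^α - 1)` for some `b`.
The least such threshold is `2 √(σ (σ - γ_α σ^{1/(1-α)}))` for some `1 ≤ σ ≤ M_α`, which is at most
`2 √(M_α (M_α - γ_α))`.
-/

lemma exists_mul_sub_mul_exp_le {ν c : ℝ} (hν : 0 ≤ ν) (hc : 0 < c) :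
    ∃ C, ∀ x, ν * x - c * exp x ≤ C := by
  have hε : 0 < c / (ν + 1) := by positivity
  refine ⟨-(ν * log (c / (ν + 1)) + ν), fun x => ?_⟩
  have htangent : x + log (c / (ν + 1)) + 1 ≤ exp x * (c / (ν + 1)) := by
    simpa only [exp_add, exp_log hε] using add_one_le_exp (x + log (c / (ν + 1)))
  have hslope : ν * (exp x * (c / (ν + 1))) ≤ c * exp x := by
    rw [mul_div_assoc', mul_div_assoc', div_le_iff₀ (by positivity)]
    nlinarith [mul_pos hc (exp_pos x)]
  linarith [mul_le_mul_of_nonneg_left htangent hν]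

lemma integral_exp_smul_comp_exp {E : Type*} [NormedAddCommGroup E] [NormedSpace ℝ E]
    (g : ℝ → E) : ∫ x, exp x • g (exp x) = ∫ y in Set.Ioi 0, g y := by
  rw [← range_exp, ← Set.image_univ,
    integral_image_eq_integral_abs_deriv_smul MeasurableSet.univ
      (fun x _ => (hasDerivAt_exp x).hasDerivWithinAt) exp_injective.injOn g,
    setIntegral_univ]
  simp only [abs_exp]

lemma integral_exp_mul_sub_mul_exp {ν c : ℝ} (hν : 0 < ν) (hc : 0 < c) :
    ∫ x, exp (ν * x - c * exp x) = (1 / c) ^ ν * Gamma ν := by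
  rw [← integral_rpow_mul_exp_neg_mul_Ioi hν hc, ← integral_exp_smul_comp_exp]
  refine integral_congr_ae (ae_of_all _ fun x => ?_)
  simp only [smul_eq_mul, ← exp_mul, ← exp_add]
  ring_nf

lemma integrable_exp_mul_sub_mul_exp {ν c : ℝ} (hν : 0 < ν) (hc : 0 < c) :
    Integrable fun x => exp (ν * x - c * exp x) := by
  refine .of_integral_ne_zero ?_
  rw [integral_exp_mul_sub_mul_exp hν hc]
  positivity

lemma gammaAlpha_pos {α : ℝ} (hα : α ∈ Set.Ioo 0 1) : 0 < gammaAlpha α :=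
  mul_pos (sub_pos.2 hα.2) (rpow_pos_of_pos hα.1 _)

lemma gammaAlpha_lt_one {α : ℝ} (hα : α ∈ Set.Ioo 0 1) : gammaAlpha α < 1 := by
  obtain ⟨hα₀, hα₁⟩ := hα
  have hβ : 0 ≤ α / (1 - α) := div_nonneg hα₀.le (sub_pos.2 hα₁).le
  calc gammaAlpha α ≤ (1 - α) * 1 :=
        mul_le_mul_of_nonneg_left (rpow_le_one hα₀.le hα₁.le hβ) (sub_pos.2 hα₁).le
    _ < 1 := by linarith

lemma mul_rpow_le_add_gammaAlpha_mul_rpow {α z b : ℝ} (hα : α ∈ Set.Ioo 0 1) (hz : 0 ≤ z)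
    (hb : 0 ≤ b) : z * b ^ α ≤ b + gammaAlpha α * z ^ (1 / (1 - α)) := by
  obtain ⟨hα₀, hα₁⟩ := hα
  have hα' : 0 < 1 - α := sub_pos.2 hα₁
  have hconj : (1 / α).HolderConjugate (1 / (1 - α)) :=
    holderConjugate_one_div hα₀ hα' (by ring)
  calc z * b ^ α = (b / α) ^ α * (z * α ^ α) := by
        rw [div_rpow hb hα₀.le]; field_simp
    _ ≤ ((b / α) ^ α) ^ (1 / α) / (1 / α) + (z * α ^ α) ^ (1 / (1 - α)) / (1 / (1 - α)) :=
        young_inequality_of_nonneg (by positivity) (by positivity) hconj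
    _ = b + gammaAlpha α * z ^ (1 / (1 - α)) := by
        rw [← rpow_mul (by positivity), mul_one_div_cancel hα₀.ne', rpow_one,
          mul_rpow hz (by positivity), ← rpow_mul hα₀.le, mul_one_div, gammaAlpha]
        field_simp

lemma gammaAlpha_mul_rpow_saddle {α b : ℝ} (hα : α ∈ Set.Ioo 0 1) (hb : 0 < b) :
    gammaAlpha α * (b ^ (1 - α) / α) ^ (1 / (1 - α)) = (1 - α) / α * b := by
  obtain ⟨hα₀, hα₁⟩ := hα
  have hα' : 0 < 1 - α := sub_pos.2 hα₁
  have hexp : α ^ (1 / (1 - α)) = α ^ (α / (1 - α)) * α := by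
    rw [← rpow_add_one hα₀.ne']; congr 1; field_simp; ring
  rw [div_rpow (by positivity) hα₀.le, ← rpow_mul hb.le, mul_one_div_cancel hα'.ne', rpow_one,
    hexp, gammaAlpha]
  field_simp

lemma exists_mul_exp_mul_le {α c : ℝ} (hα : α ∈ Set.Ioo 0 1) (hc : 0 < c) (z : ℝ) :
    ∃ C, ∀ x, z * exp (α * x) ≤ c * exp x + C := by
  refine ⟨gammaAlpha α * (|z| * c ^ (-α)) ^ (1 / (1 - α)), fun x => ?_⟩
  calc z * exp (α * x) ≤ |z| * exp (α * x) := by gcongr; exact le_abs_self z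
    _ = |z| * c ^ (-α) * (c * exp x) ^ α := by
        rw [mul_rpow hc.le (exp_pos x).le, rpow_neg hc.le, ← exp_mul, mul_comm x]; field_simp
    _ ≤ _ := mul_rpow_le_add_gammaAlpha_mul_rpow hα (by positivity) (by positivity)

lemma integrable_exp_mul_sub_mul_exp_add {α ν κ : ℝ} (hα : α ∈ Set.Ioo 0 1) (hν : 0 < ν)
    (hκ : 0 < κ) (z : ℝ) :
    Integrable fun x => exp (ν * x - κ * exp x + z * exp (α * x)) := by
  obtain ⟨C, hC⟩ := exists_mul_exp_mul_le hα (half_pos hκ) z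
  refine ((integrable_exp_mul_sub_mul_exp hν (half_pos hκ)).const_mul (exp C)).mono'
    (by fun_prop) (ae_of_all _ fun x => ?_)
  rw [norm_of_nonneg (exp_pos _).le, ← exp_add]
  exact exp_le_exp.2 (by linarith [hC x])

lemma tendsto_exp_mul_sub_mul_exp_add_atTop {α ν κ : ℝ} (hα : α ∈ Set.Ioo 0 1) (hν : 0 ≤ ν)
    (hκ : 0 < κ) (z : ℝ) :
    Tendsto (fun x => exp (ν * x - κ * exp x + z * exp (α * x))) atTop (𝓝 0) := by
  obtain ⟨C, hC⟩ := exists_mul_exp_mul_le hα (half_pos hκ) z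
  obtain ⟨D, hD⟩ := exists_mul_sub_mul_exp_le (add_nonneg hν zero_le_one) (half_pos hκ)
  have hlin : Tendsto (fun x : ℝ => C + D + -x) atTop atBot :=
    tendsto_atBot_add_const_left _ _ tendsto_neg_atTop_atBot
  exact tendsto_exp_atBot.comp (tendsto_atBot_mono (fun x => by linarith [hC x, hD x]) hlin)

/-- The integrand `e^{s - z s^α} s^{ν-1} ds` of Hankel's contour integral for the Wright function,
in the coordinate `s = e^w`. The logarithmic coordinate makes it entire, with no branch cut, and
turns sectors of the `s`-plane into rectangles. -/
noncomputable def hankelIntegrand (α ν z : ℝ) (w : ℂ) : ℂ :=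
  Complex.exp (Complex.exp w - z * Complex.exp (α * w) + ν * w)

lemma differentiable_hankelIntegrand (α ν z : ℝ) : Differentiable ℂ (hankelIntegrand α ν z) := by
  unfold hankelIntegrand
  fun_prop

lemma norm_hankelIntegrand (α ν z x θ : ℝ) :
    ‖hankelIntegrand α ν z (x + θ * Complex.I)‖ =
      exp (exp x * cos θ - z * (exp (α * x) * cos (α * θ)) + ν * x) := by
  simp [hankelIntegrand, Complex.norm_exp, Complex.exp_re]

lemma im_hankelIntegrand_ofReal (α ν z x : ℝ) : (hankelIntegrand α ν z x).im = 0 := by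
  have hreal : hankelIntegrand α ν z x = (exp (exp x - z * exp (α * x) + ν * x) : ℝ) := by
    simp [hankelIntegrand]
  rw [hreal, Complex.ofReal_im]

lemma norm_hankelIntegrand_le {κ θ : ℝ} (α ν z x : ℝ) (hκ : κ ≤ -cos θ) :
    ‖hankelIntegrand α ν z (x + θ * Complex.I)‖ ≤
      exp (ν * x - κ * exp x + |z| * exp (α * x)) := by
  have hcos : |z * cos (α * θ)| ≤ |z| := by
    rw [abs_mul]; exact mul_le_of_le_one_right (abs_nonneg z) (abs_cos_le_one _)
  rw [norm_hankelIntegrand, exp_le_exp]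
  nlinarith [mul_le_mul_of_nonneg_left hκ (exp_pos x).le,
    mul_le_mul_of_nonneg_left ((neg_le_abs _).trans hcos) (exp_pos (α * x)).le]

lemma integrable_hankelIntegrand {α ν φ : ℝ} (hα : α ∈ Set.Ioo 0 1) (hν : 0 < ν)
    (hφ : cos φ < 0) (z : ℝ) :
    Integrable fun x : ℝ => hankelIntegrand α ν z (x + φ * Complex.I) := by
  have hcont : Continuous fun x : ℝ => hankelIntegrand α ν z (x + φ * Complex.I) :=
    (differentiable_hankelIntegrand α ν z).continuous.comp (by fun_prop)
  exact (integrable_exp_mul_sub_mul_exp_add hα hν (neg_pos.2 hφ) |z|).mono'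
    hcont.aestronglyMeasurable (ae_of_all _ fun x => norm_hankelIntegrand_le α ν z x le_rfl)

lemma tendsto_integral_hankelIntegrand_atBot {α ν : ℝ} (hα : 0 < α) (hν : 0 < ν) (z φ : ℝ) :
    Tendsto (fun x : ℝ => ∫ θ in (0 : ℝ)..φ, hankelIntegrand α ν z (x + θ * Complex.I))
      atBot (𝓝 0) := by
  have hexponent : Tendsto (fun x => ν * x + (exp x + |z| * exp (α * x))) atBot atBot := by
    have hexp : Tendsto (fun x => exp x + |z| * exp (α * x)) atBot (𝓝 (0 + |z| * 0)) :=
      tendsto_exp_atBot.add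
        ((tendsto_exp_atBot.comp (tendsto_id.const_mul_atBot hα)).const_mul _)
    exact (tendsto_id.const_mul_atBot hν).atBot_add hexp
  have hbound := (tendsto_exp_atBot.comp hexponent).mul_const |φ - 0|
  rw [zero_mul] at hbound
  refine squeeze_zero_norm (fun x => ?_) hbound
  refine intervalIntegral.norm_integral_le_of_norm_le_const fun θ _ => ?_
  exact (norm_hankelIntegrand_le α ν z x (neg_le_neg (cos_le_one θ))).trans_eq
    (congrArg exp (by ring))

lemma pi_mul_inv_Gamma_one_sub {w : ℝ} (hw : 0 < w) :
    π * (Gamma (1 - w))⁻¹ = Gamma w * sin (π * w) := by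
  have hrefl := Gamma_mul_Gamma_one_sub w
  have hw' := (Gamma_pos_of_pos hw).ne'
  rcases eq_or_ne (sin (π * w)) 0 with hsin | hsin
  · have hzero : Gamma (1 - w) = 0 := by simpa [hsin, hw'] using hrefl
    simp [hzero, hsin]
  · have hne : Gamma (1 - w) ≠ 0 := fun h => by
      rw [h, mul_zero] at hrefl
      exact div_ne_zero pi_ne_zero hsin hrefl.symm
    rw [eq_div_iff hsin] at hrefl
    rw [← div_eq_mul_inv, div_eq_iff hne]
    linarith

/-- The `n`-th term of the expansion of `hankelIntegrand` in powers of `z` on the line `Im w = π`,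
with its constant phase split off. -/
noncomputable def hankelTerm (α ν z : ℝ) (n : ℕ) (x : ℝ) : ℂ :=
  ((-z) ^ n / n.factorial * exp ((α * n + ν) * x - exp x) : ℝ) *
    Complex.exp ((π * (α * n + ν) : ℝ) * Complex.I)

lemma norm_hankelTerm (α ν z : ℝ) (n : ℕ) (x : ℝ) :
    ‖hankelTerm α ν z n x‖ =
      exp (ν * x - exp x) * ((|z| * exp (α * x)) ^ n / n.factorial) := by
  rw [hankelTerm, norm_mul, Complex.norm_exp_ofReal_mul_I, mul_one, Complex.norm_real,
    norm_mul, norm_div, norm_pow, norm_neg, norm_eq_abs z, norm_of_nonneg (exp_pos _).le,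
    norm_of_nonneg (Nat.cast_nonneg n.factorial), mul_pow, ← exp_nat_mul]
  have hsplit : exp ((α * n + ν) * x - exp x) =
      exp (ν * x - exp x) * exp (n * (α * x)) := by
    rw [← exp_add]; ring_nf
  rw [hsplit]
  ring

lemma hasSum_hankelTerm (α ν z x : ℝ) :
    HasSum (fun n => hankelTerm α ν z n x) (hankelIntegrand α ν z (x + π * Complex.I)) := by
  have hterm (n : ℕ) : hankelTerm α ν z n x =
      Complex.exp (-Complex.exp x + ν * (x + π * Complex.I)) *
        ((-(z * Complex.exp (α * (x + π * Complex.I)))) ^ n / n.factorial) := by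
    rw [hankelTerm, ← neg_mul, mul_pow, ← Complex.exp_nat_mul]
    push_cast
    rw [mul_div_right_comm, mul_left_comm, mul_assoc, ← Complex.exp_add, ← Complex.exp_add]
    ring_nf
  have hsum : hankelIntegrand α ν z (x + π * Complex.I) =
      Complex.exp (-Complex.exp x + ν * (x + π * Complex.I)) *
        Complex.exp (-(z * Complex.exp (α * (x + π * Complex.I)))) := by
    rw [hankelIntegrand, Complex.exp_add (x : ℂ), Complex.exp_pi_mul_I, ← Complex.exp_add]
    ring_nf
  have hexp := NormedSpace.expSeries_div_hasSum_exp (-(z * Complex.exp (α * (x + π * Complex.I))))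
  rw [← Complex.exp_eq_exp_ℂ] at hexp
  simp only [hterm, hsum]
  exact hexp.mul_left _

lemma im_integral_hankelTerm {α ν : ℝ} (hα : 0 ≤ α) (hν : 0 < ν) (z : ℝ) (n : ℕ) :
    (∫ x, hankelTerm α ν z n x).im =
      π * ((-z) ^ n / (n.factorial * Gamma (-α * n + (1 - ν)))) := by
  have hw : 0 < α * n + ν := by positivity
  have harg : -α * n + (1 - ν) = 1 - (α * n + ν) := by ring
  have hGamma : ∫ x, exp ((α * n + ν) * x - exp x) = Gamma (α * n + ν) := by
    simpa using integral_exp_mul_sub_mul_exp hw one_pos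
  simp only [hankelTerm]
  rw [integral_mul_const, integral_complex_ofReal, integral_const_mul, hGamma,
    Complex.im_ofReal_mul, Complex.exp_ofReal_mul_I_im, harg, mul_assoc,
    ← pi_mul_inv_Gamma_one_sub hw]
  ring

lemma pi_mul_wrightFn_neg {α μ : ℝ} (hα : α ∈ Set.Ioo 0 1) (hμ : μ < 1) (z : ℝ) :
    π * wrightFn (-α) μ (-z) =
      (∫ x : ℝ, hankelIntegrand α (1 - μ) z (x + π * Complex.I)).im := by
  have hν : 0 < 1 - μ := sub_pos.2 hμ
  have hbound (x : ℝ) : HasSum (fun n => ‖hankelTerm α (1 - μ) z n x‖)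
      (exp ((1 - μ) * x - 1 * exp x + |z| * exp (α * x))) := by
    have hexp := NormedSpace.expSeries_div_hasSum_exp (|z| * exp (α * x))
    rw [← exp_eq_exp_ℝ] at hexp
    simp only [norm_hankelTerm, exp_add, one_mul]
    exact hexp.mul_left _
  have hmeas (n : ℕ) : AEStronglyMeasurable (hankelTerm α (1 - μ) z n) := by
    unfold hankelTerm
    fun_prop
  have hsum := hasSum_integral_of_dominated_convergence
    (F := hankelTerm α (1 - μ) z) (fun n x => ‖hankelTerm α (1 - μ) z n x‖)
    hmeas (fun n => ae_of_all _ fun x => le_rfl)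
    (ae_of_all _ fun x => (hbound x).summable)
    (by simpa only [(hbound _).tsum_eq] using
      integrable_exp_mul_sub_mul_exp_add hα hν one_pos |z|)
    (ae_of_all _ fun x => hasSum_hankelTerm α (1 - μ) z x)
  have him := Complex.hasSum_im hsum
  simp only [im_integral_hankelTerm hα.1.le hν, sub_sub_cancel] at him
  rw [wrightFn, ← tsum_mul_left, him.tsum_eq]

lemma im_integral_Iic_eq_re_integral {f : ℂ → ℂ} {φ : ℝ} (hf : Differentiable ℂ f)
    (hreal : ∀ x : ℝ, (f x).im = 0)
    (hint : Integrable fun x : ℝ => f (x + φ * Complex.I))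
    (hside : Tendsto (fun x : ℝ => ∫ θ in (0 : ℝ)..φ, f (x + θ * Complex.I)) atBot (𝓝 0))
    (R : ℝ) :
    (∫ x in Set.Iic R, f (x + φ * Complex.I)).im =
      (∫ θ in (0 : ℝ)..φ, f (R + θ * Complex.I)).re := by
  have hrect (x : ℝ) : (∫ r in x..R, f (r + φ * Complex.I)).im =
      (∫ θ in (0 : ℝ)..φ, f (R + θ * Complex.I)).re -
        (∫ θ in (0 : ℝ)..φ, f (x + θ * Complex.I)).re := by
    have hbottom : (∫ r in x..R, f r).im = 0 := by
      rw [← Complex.imCLM_apply, ← ContinuousLinearMap.intervalIntegral_comp_comm]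
      · simp [hreal]
      · exact (hf.continuous.comp Complex.continuous_ofReal).intervalIntegrable _ _
    have hcauchy := congrArg Complex.im (Complex.integral_boundary_rect_eq_zero_of_differentiableOn
      f x (R + φ * Complex.I) hf.differentiableOn)
    simp only [Complex.ofReal_im, Complex.ofReal_zero, zero_mul, add_zero, Complex.ofReal_re,
      Complex.add_re, Complex.mul_re, Complex.I_re, mul_zero, Complex.I_im, mul_one, sub_self,
      Complex.add_im, Complex.mul_im, zero_add, smul_eq_mul, Complex.sub_im, one_mul,
      Complex.zero_im] at hcauchy
    linarith
  have hleft : Tendsto (fun x => (∫ r in x..R, f (r + φ * Complex.I)).im) atBot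
      (𝓝 (∫ x in Set.Iic R, f (x + φ * Complex.I)).im) :=
    (Complex.continuous_im.tendsto _).comp
      (intervalIntegral_tendsto_integral_Iic R hint.integrableOn tendsto_id)
  have hright : Tendsto (fun x : ℝ => (∫ θ in (0 : ℝ)..φ, f (R + θ * Complex.I)).re -
      (∫ θ in (0 : ℝ)..φ, f (x + θ * Complex.I)).re) atBot
      (𝓝 (∫ θ in (0 : ℝ)..φ, f (R + θ * Complex.I)).re) := by
    simpa using ((Complex.continuous_re.tendsto _).comp hside).const_sub
      (∫ θ in (0 : ℝ)..φ, f (R + θ * Complex.I)).re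
  exact tendsto_nhds_unique hleft (by simpa only [hrect] using hright)

lemma im_integral_hankelIntegrand_Iic {α ν φ : ℝ} (hα : α ∈ Set.Ioo 0 1) (hν : 0 < ν)
    (hφ : cos φ < 0) (z R : ℝ) :
    (∫ x in Set.Iic R, hankelIntegrand α ν z (x + φ * Complex.I)).im =
      (∫ θ in (0 : ℝ)..φ, hankelIntegrand α ν z (R + θ * Complex.I)).re :=
  im_integral_Iic_eq_re_integral (differentiable_hankelIntegrand α ν z)
    (im_hankelIntegrand_ofReal α ν z) (integrable_hankelIntegrand hα hν hφ z)
    (tendsto_integral_hankelIntegrand_atBot hα.1 hν z φ) R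

lemma im_integral_hankelIntegrand_eq_pi {α ν φ : ℝ} (hα : α ∈ Set.Ioo 0 1) (hν : 0 < ν)
    (hφ : φ ∈ Set.Ioc (π / 2) π) (z : ℝ) :
    (∫ x : ℝ, hankelIntegrand α ν z (x + φ * Complex.I)).im =
      (∫ x : ℝ, hankelIntegrand α ν z (x + π * Complex.I)).im := by
  have hcos : cos φ < 0 := cos_neg_of_pi_div_two_lt_of_lt hφ.1 (by linarith [hφ.2, pi_pos])
  have hlim {ψ : ℝ} (hψ : cos ψ < 0) : Tendsto (fun R : ℝ =>
      (∫ θ in (0 : ℝ)..ψ, hankelIntegrand α ν z (R + θ * Complex.I)).re) atTop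
      (𝓝 (∫ x : ℝ, hankelIntegrand α ν z (x + ψ * Complex.I)).im) := by
    simp only [← im_integral_hankelIntegrand_Iic hα hν hψ z]
    exact (Complex.continuous_im.tendsto _).comp
      ((aecover_Iic tendsto_id).integral_tendsto_of_countably_generated
        (integrable_hankelIntegrand hα hν hψ z))
  have hcont (R : ℝ) : Continuous fun θ : ℝ => hankelIntegrand α ν z (R + θ * Complex.I) :=
    (differentiable_hankelIntegrand α ν z).continuous.comp (by fun_prop)
  have hvanish : Tendsto (fun R : ℝ =>
      ∫ θ in φ..π, hankelIntegrand α ν z (R + θ * Complex.I)) atTop (𝓝 0) := by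
    have hbound := (tendsto_exp_mul_sub_mul_exp_add_atTop hα hν.le
      (neg_pos.2 hcos) |z|).mul_const |π - φ|
    rw [zero_mul] at hbound
    refine squeeze_zero_norm (fun R => ?_) hbound
    refine intervalIntegral.norm_integral_le_of_norm_le_const fun θ hθ => ?_
    rw [Set.uIoc_of_le hφ.2] at hθ
    have hanti : cos θ ≤ cos φ :=
      cos_le_cos_of_nonneg_of_le_pi (by linarith [hφ.1, pi_pos]) hθ.2 hθ.1.le
    exact norm_hankelIntegrand_le α ν z R (neg_le_neg hanti)
  have hdiff := (hlim (by simp : cos π < 0)).sub (hlim hcos)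
  simp only [← Complex.sub_re,
    intervalIntegral.integral_interval_sub_left ((hcont _).intervalIntegrable _ _)
      ((hcont _).intervalIntegrable _ _)] at hdiff
  have hzero := (Complex.continuous_re.tendsto _).comp hvanish
  exact (sub_eq_zero.1 (tendsto_nhds_unique hdiff hzero)).symm

lemma pi_mul_wrightFn_neg_eq_arc_add_ray {α μ φ : ℝ} (hα : α ∈ Set.Ioo 0 1) (hμ : μ < 1)
    (hφ : φ ∈ Set.Ioc (π / 2) π) (z R : ℝ) :
    π * wrightFn (-α) μ (-z) =
      (∫ θ in (0 : ℝ)..φ, hankelIntegrand α (1 - μ) z (R + θ * Complex.I)).re +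
        (∫ x in Set.Ioi R, hankelIntegrand α (1 - μ) z (x + φ * Complex.I)).im := by
  have hν : 0 < 1 - μ := sub_pos.2 hμ
  have hcos : cos φ < 0 := cos_neg_of_pi_div_two_lt_of_lt hφ.1 (by linarith [hφ.2, pi_pos])
  have hint := integrable_hankelIntegrand hα hν hcos z
  rw [pi_mul_wrightFn_neg hα hμ, ← im_integral_hankelIntegrand_eq_pi hα hν hφ,
    ← im_integral_hankelIntegrand_Iic hα hν hcos, ← Complex.add_im,
    intervalIntegral.integral_Iic_add_Ioi hint.integrableOn hint.integrableOn]

lemma one_sub_cos_mul_le {α θ : ℝ} (hα : α ∈ Set.Icc 0 1) (hθ : 0 ≤ θ) (hθπ : (1 + α) * θ ≤ π) :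
    1 - cos (α * θ) ≤ α * (1 - cos θ) := by
  have hsin : ∀ u ∈ Set.Icc 0 θ, sin (α * u) ≤ sin u := by
    rintro u ⟨hu₀, huθ⟩
    have hsum : (1 + α) * u ≤ π :=
      (mul_le_mul_of_nonneg_left huθ (by linarith [hα.1])).trans hθπ
    have hprod : 0 ≤ α * u := mul_nonneg hα.1 hu₀
    have hle : α * u ≤ u := mul_le_of_le_one_left hu₀ hα.2
    rcases le_total u (π / 2) with hu | hu
    · exact sin_le_sin_of_le_of_le_pi_div_two (by linarith [pi_pos]) hu hle
    · rw [← sin_pi_sub u]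
      exact sin_le_sin_of_le_of_le_pi_div_two (by linarith [pi_pos]) (by linarith) (by linarith)
  calc 1 - cos (α * θ) = α * ∫ u in (0 : ℝ)..θ, sin (α * u) := by
        rw [intervalIntegral.mul_integral_comp_mul_left, integral_sin, mul_zero, cos_zero]
    _ ≤ α * ∫ u in (0 : ℝ)..θ, sin u :=
        mul_le_mul_of_nonneg_left (intervalIntegral.integral_mono_on hθ
          (Continuous.intervalIntegrable (by fun_prop) _ _)
          (continuous_sin.intervalIntegrable _ _) hsin) hα.1
    _ = α * (1 - cos θ) := by rw [integral_sin, cos_zero]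

/-- The opening angle `φ` of the Hankel contour, chosen so that `φ + α φ = π`: for `s = r e^{iφ}`,
the real parts of `s` and `-s^α` are then `-κ r` and `-κ r^α` with the same `κ = -cos φ > 0`. -/
noncomputable def hankelAngle (α : ℝ) : ℝ := π / (1 + α)

lemma hankelAngle_mem {α : ℝ} (hα : α ∈ Set.Ioo 0 1) : hankelAngle α ∈ Set.Ioc (π / 2) π :=
  ⟨div_lt_div_of_pos_left pi_pos (by linarith [hα.1]) (by linarith [hα.2]),
    div_le_self pi_pos.le (by linarith [hα.1])⟩

lemma cos_hankelAngle_neg {α : ℝ} (hα : α ∈ Set.Ioo 0 1) : cos (hankelAngle α) < 0 :=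
  cos_neg_of_pi_div_two_lt_of_lt (hankelAngle_mem hα).1
    (by linarith [(hankelAngle_mem hα).2, pi_pos])

lemma one_add_mul_hankelAngle {α : ℝ} (hα : α ∈ Set.Ioo 0 1) : (1 + α) * hankelAngle α = π :=
  mul_div_cancel₀ _ (by linarith [hα.1])

lemma cos_mul_hankelAngle {α : ℝ} (hα : α ∈ Set.Ioo 0 1) :
    cos (α * hankelAngle α) = -cos (hankelAngle α) := by
  rw [← cos_pi_sub, ← one_add_mul_hankelAngle hα]
  ring_nf

lemma norm_hankelIntegrand_arc_le {α z R θ : ℝ} (hα : α ∈ Set.Ioo 0 1) (ν : ℝ)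
    (hsaddle : z * exp (α * R) = exp R / α) (hθ : 0 ≤ θ) (hθπ : (1 + α) * θ ≤ π) :
    ‖hankelIntegrand α ν z (R + θ * Complex.I)‖ ≤ exp (ν * R - (1 - α) / α * exp R) := by
  have hcos := mul_le_mul_of_nonneg_left (one_sub_cos_mul_le (Set.Ioo_subset_Icc_self hα) hθ hθπ)
    (div_nonneg (exp_pos R).le hα.1.le)
  rw [norm_hankelIntegrand, exp_le_exp, ← mul_assoc, hsaddle]
  calc exp R * cos θ - exp R / α * cos (α * θ) + ν * R
      = exp R / α * (1 - cos (α * θ)) - exp R / α * (α * (1 - cos θ)) +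
          (ν * R - (1 - α) / α * exp R) := by
        have := hα.1.ne'
        field_simp
        ring
    _ ≤ ν * R - (1 - α) / α * exp R := by linarith

lemma norm_hankelIntegrand_ray_le {α δ z R x : ℝ} (hα : α ∈ Set.Ioo 0 1) (ν : ℝ)
    (hδ : δ ∈ Set.Icc 0 1) (hsaddle : z * exp (α * R) = exp R / α) (hx : R ≤ x) :
    ‖hankelIntegrand α ν z (x + hankelAngle α * Complex.I)‖ ≤
      exp (-((1 - δ) * ((1 - α) / α * exp R))) *
        exp (ν * x - δ * -cos (hankelAngle α) * exp x) := by
  set κ := -cos (hankelAngle α) with hκ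
  have hκ₀ : 0 < κ := neg_pos.2 (cos_hankelAngle_neg hα)
  have hz : 0 ≤ z := by
    have : 0 ≤ z * exp (α * R) := hsaddle ▸ div_nonneg (exp_pos R).le hα.1.le
    exact nonneg_of_mul_nonneg_left this (exp_pos _)
  have hmono : exp R / α ≤ z * exp (α * x) := by
    rw [← hsaddle]
    gcongr
    exact hα.1.le
  have hκα : 1 - α ≤ κ * (1 + α) := by
    have hcos := one_sub_cos_mul_le (Set.Ioo_subset_Icc_self hα)
      (pi_div_two_pos.trans (hankelAngle_mem hα).1).le (one_add_mul_hankelAngle hα).le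
    rw [cos_mul_hankelAngle hα] at hcos
    linarith
  have hrate : (1 - α) / α * exp R ≤ κ * (exp x + z * exp (α * x)) :=
    calc (1 - α) / α * exp R ≤ κ * (1 + α) / α * exp R := by
          gcongr
          exact hα.1.le
      _ = κ * (exp R + exp R / α) := by
          have := hα.1.ne'
          field_simp
          ring
      _ ≤ κ * (exp x + z * exp (α * x)) := by gcongr
  have hsplit := mul_le_mul_of_nonneg_left hrate (sub_nonneg.2 hδ.2)
  have hrest : 0 ≤ δ * κ * (z * exp (α * x)) :=
    mul_nonneg (mul_nonneg hδ.1 hκ₀.le) (mul_nonneg hz (exp_pos _).le)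
  rw [norm_hankelIntegrand, cos_mul_hankelAngle hα, ← hκ, ← exp_add, exp_le_exp,
    ← neg_neg (cos (hankelAngle α)), ← hκ]
  linarith

lemma norm_integral_hankelIntegrand_arc_le {α z R : ℝ} (hα : α ∈ Set.Ioo 0 1) (ν : ℝ)
    (hsaddle : z * exp (α * R) = exp R / α) :
    ‖∫ θ in (0 : ℝ)..hankelAngle α, hankelIntegrand α ν z (R + θ * Complex.I)‖ ≤
      exp (ν * R - (1 - α) / α * exp R) * hankelAngle α := by
  have hφ : 0 < hankelAngle α := pi_div_two_pos.trans (hankelAngle_mem hα).1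
  have hbound : ∀ θ ∈ Set.uIoc 0 (hankelAngle α),
      ‖hankelIntegrand α ν z (R + θ * Complex.I)‖ ≤ exp (ν * R - (1 - α) / α * exp R) := by
    intro θ hθ
    rw [Set.uIoc_of_le hφ.le] at hθ
    refine norm_hankelIntegrand_arc_le hα _ hsaddle hθ.1.le ?_
    rw [← one_add_mul_hankelAngle hα]
    exact mul_le_mul_of_nonneg_left hθ.2 (by linarith [hα.1])
  simpa [abs_of_pos hφ] using intervalIntegral.norm_integral_le_of_norm_le_const hbound

lemma norm_integral_hankelIntegrand_ray_le {α ν δ z R : ℝ} (hα : α ∈ Set.Ioo 0 1) (hν : 0 < ν)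
    (hδ : δ ∈ Set.Ioc 0 1) (hsaddle : z * exp (α * R) = exp R / α) :
    ‖∫ x in Set.Ioi R, hankelIntegrand α ν z (x + hankelAngle α * Complex.I)‖ ≤
      exp (-((1 - δ) * ((1 - α) / α * exp R))) *
        ∫ x, exp (ν * x - δ * -cos (hankelAngle α) * exp x) := by
  have hc : 0 < δ * -cos (hankelAngle α) :=
    mul_pos hδ.1 (neg_pos.2 (cos_hankelAngle_neg hα))
  have hint := (integrable_exp_mul_sub_mul_exp hν hc).const_mul
    (exp (-((1 - δ) * ((1 - α) / α * exp R))))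
  refine (norm_integral_le_of_norm_le hint.integrableOn
    ((ae_restrict_mem measurableSet_Ioi).mono fun x hx =>
      norm_hankelIntegrand_ray_le hα _ (Set.Ioc_subset_Icc_self hδ) hsaddle
        (le_of_lt hx))).trans ?_
  rw [← integral_const_mul]
  exact setIntegral_le_integral hint (ae_of_all _ fun x => by positivity)

lemma exists_abs_wrightFn_neg_le_of_saddle {α μ δ : ℝ} (hα : α ∈ Set.Ioo 0 1) (hμ : μ < 1)
    (hδ : δ ∈ Set.Ioc 0 1) :
    ∃ C, ∀ z R, z * exp (α * R) = exp R / α →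
      |wrightFn (-α) μ (-z)| ≤ C * exp (-((1 - δ) * ((1 - α) / α * exp R))) := by
  have hν : 0 < 1 - μ := sub_pos.2 hμ
  have hφ : 0 < hankelAngle α := pi_div_two_pos.trans (hankelAngle_mem hα).1
  obtain ⟨C, hC⟩ := exists_mul_sub_mul_exp_le hν.le
    (mul_pos hδ.1 (div_pos (sub_pos.2 hα.2) hα.1))
  set J := ∫ x, exp ((1 - μ) * x - δ * -cos (hankelAngle α) * exp x)
  refine ⟨(exp C * hankelAngle α + J) / π, fun z R hsaddle => ?_⟩
  set E := exp (-((1 - δ) * ((1 - α) / α * exp R))) with hE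
  have harc : exp ((1 - μ) * R - (1 - α) / α * exp R) ≤ exp C * E := by
    rw [hE, ← exp_add]
    exact exp_le_exp.2 (by linarith [hC R])
  rw [div_mul_eq_mul_div, le_div_iff₀ pi_pos]
  calc |wrightFn (-α) μ (-z)| * π = |π * wrightFn (-α) μ (-z)| := by
        rw [abs_mul, abs_of_pos pi_pos, mul_comm]
    _ ≤ exp ((1 - μ) * R - (1 - α) / α * exp R) * hankelAngle α + E * J := by
        rw [pi_mul_wrightFn_neg_eq_arc_add_ray hα hμ (hankelAngle_mem hα) z R]
        exact (abs_add_le _ _).trans (add_le_add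
          ((Complex.abs_re_le_norm _).trans (norm_integral_hankelIntegrand_arc_le hα _ hsaddle))
          ((Complex.abs_im_le_norm _).trans
            (norm_integral_hankelIntegrand_ray_le hα hν hδ hsaddle)))
    _ ≤ exp C * E * hankelAngle α + E * J := by gcongr
    _ = (exp C * hankelAngle α + J) * E := by ring

lemma exists_abs_wrightFn_neg_le {α μ δ : ℝ} (hα : α ∈ Set.Ioo 0 1) (hμ : μ < 1)
    (hδ : δ ∈ Set.Ioc 0 1) :
    ∃ C, ∀ z, 0 < z → |wrightFn (-α) μ (-z)| ≤
      C * exp (-((1 - δ) * (gammaAlpha α * z ^ (1 / (1 - α))))) := by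
  obtain ⟨C, hC⟩ := exists_abs_wrightFn_neg_le_of_saddle hα hμ hδ
  refine ⟨C, fun z hz => ?_⟩
  have hα' : 1 - α ≠ 0 := (sub_pos.2 hα.2).ne'
  have hαz : 0 < α * z := mul_pos hα.1 hz
  set b := (α * z) ^ (1 / (1 - α)) with hb
  have hb₀ : 0 < b := rpow_pos_of_pos hαz _
  have hzb : z = b ^ (1 - α) / α := by
    rw [hb, ← rpow_mul hαz.le, one_div_mul_cancel hα', rpow_one, mul_div_cancel_left₀ _ hα.1.ne']
  have hsaddle : z * exp (α * log b) = exp (log b) / α := by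
    rw [mul_comm α, ← rpow_def_of_pos hb₀, exp_log hb₀, hzb, div_mul_eq_mul_div, ← rpow_add hb₀,
      sub_add_cancel, rpow_one]
  have hbound := hC z (log b) hsaddle
  rwa [exp_log hb₀, ← gammaAlpha_mul_rpow_saddle hα hb₀, ← hzb] at hbound

lemma exists_exp_neg_div_div_rpow_le {p c : ℝ} (hp : 0 ≤ p) (hc : 0 < c) :
    ∃ C, ∀ s, 0 < s → exp (-(c / s)) / s ^ p ≤ C := by
  obtain ⟨C, hC⟩ := exists_mul_sub_mul_exp_le hp hc
  refine ⟨exp C, fun s hs => ?_⟩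
  have hlog := hC (-log s)
  rw [exp_neg, exp_log hs] at hlog
  rw [rpow_def_of_pos hs, ← exp_sub, exp_le_exp, div_eq_mul_inv]
  linarith

lemma mul_mul_sqrt_le_mul_add_sq_div {A s : ℝ} (hA : 0 ≤ A) (hs : 0 < s) (r : ℝ) :
    r * √A ≤ A * s + r ^ 2 / (4 * s) := by
  have hsq : A * s + r ^ 2 / (4 * s) - r * √A = (2 * s * √A - r) ^ 2 / (4 * s) := by
    have hs' := hs.ne'
    field_simp
    linear_combination (-4 * s ^ 2) * sq_sqrt hA
  have : 0 ≤ (2 * s * √A - r) ^ 2 / (4 * s) := by positivity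
  linarith

lemma sub_sq_div_sub_gammaAlpha_mul_le {α b m δ s t r : ℝ} (hα : α ∈ Set.Ioo 0 1) (hb : 0 ≤ b)
    (hm : 0 ≤ m) (hδ : δ ∈ Set.Icc 0 1) (hA : 0 ≤ (1 - δ) * b ^ α - 1) (hs : 0 < s) (ht : 1 ≤ t)
    (hr : m * t ≤ r) :
    s - r ^ 2 / (4 * s) - (1 - δ) * (gammaAlpha α * (t ^ (-α) * s) ^ (1 / (1 - α))) ≤
      (1 - δ) * (b - m * √((1 - δ) * b ^ α - 1)) * t -
        (m ^ 2 * δ / (4 * s) + δ * ((1 - δ) * b ^ α - 1) * s) := by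
  set A := (1 - δ) * b ^ α - 1
  have ht₀ : 0 < t := one_pos.trans_le ht
  have hscale : t ^ (-α) * s * (b * t) ^ α = s * b ^ α := by
    rw [mul_rpow hb ht₀.le, rpow_neg ht₀.le]
    field_simp
  have hyoung : s * b ^ α ≤ b * t + gammaAlpha α * (t ^ (-α) * s) ^ (1 / (1 - α)) :=
    hscale ▸ mul_rpow_le_add_gammaAlpha_mul_rpow hα (by positivity) (by positivity)
  have hamgm := mul_mul_sqrt_le_mul_add_sq_div hA hs r
  have hspeed : m * t * √A ≤ r * √A := by gcongr
  have hheat : m ^ 2 / (4 * s) ≤ r ^ 2 / (4 * s) := by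
    gcongr
    exact (le_mul_of_one_le_right hm ht).trans hr
  have hyoung' := mul_le_mul_of_nonneg_left hyoung (sub_nonneg.2 hδ.2)
  have hamgm' := mul_le_mul_of_nonneg_left (hspeed.trans hamgm) (sub_nonneg.2 hδ.2)
  have hheat' := mul_le_mul_of_nonneg_left hheat hδ.1
  have hcomm : m ^ 2 * δ / (4 * s) = δ * (m ^ 2 / (4 * s)) := by ring
  linarith

lemma exists_abs_fundSol_integrand_le {α b m δ : ℝ} (d : ℕ) (hα : α ∈ Set.Ioo 0 1) (hb : 0 ≤ b)
    (hm : 0 < m) (hδ : δ ∈ Set.Ioc 0 1) (hA : 0 ≤ (1 - δ) * b ^ α - 1) :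
    ∃ C, ∀ t r s, 1 ≤ t → m * t ≤ r → 0 < s →
      |exp s * (exp (-r ^ 2 / (4 * s)) / (4 * π * s) ^ ((d : ℝ) / 2)) *
          wrightFn (-α) (1 - α) (-(t ^ (-α) * s))| ≤
        C * exp ((1 - δ) * (b - m * √((1 - δ) * b ^ α - 1)) * t) *
          exp (-(δ * ((1 - δ) * b ^ α - 1)) * s) := by
  set A := (1 - δ) * b ^ α - 1
  obtain ⟨C, hC⟩ := exists_abs_wrightFn_neg_le hα (sub_lt_self 1 hα.1) hδ
  have hC₀ : 0 ≤ C := nonneg_of_mul_nonneg_left ((abs_nonneg _).trans (hC 1 one_pos)) (exp_pos _)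
  obtain ⟨K, hK⟩ := exists_exp_neg_div_div_rpow_le (p := (d : ℝ) / 2) (c := π * m ^ 2 * δ)
    (by positivity) (mul_pos (by positivity) hδ.1)
  refine ⟨C * K, fun t r s ht hr hs => ?_⟩
  have hz : 0 < t ^ (-α) * s := mul_pos (rpow_pos_of_pos (one_pos.trans_le ht) _) hs
  have hheat : exp (-(m ^ 2 * δ / (4 * s))) / (4 * π * s) ^ ((d : ℝ) / 2) ≤ K := by
    have hscale : m ^ 2 * δ / (4 * s) = π * m ^ 2 * δ / (4 * π * s) := by
      have := pi_ne_zero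
      field_simp
    rw [hscale]
    exact hK _ (by positivity)
  have hexp := exp_le_exp.2
    (sub_sq_div_sub_gammaAlpha_mul_le hα hb hm.le (Set.Ioc_subset_Icc_self hδ) hA hs ht hr)
  rw [abs_mul, abs_of_nonneg (by positivity)]
  calc exp s * (exp (-r ^ 2 / (4 * s)) / (4 * π * s) ^ ((d : ℝ) / 2)) *
        |wrightFn (-α) (1 - α) (-(t ^ (-α) * s))|
      ≤ exp s * (exp (-r ^ 2 / (4 * s)) / (4 * π * s) ^ ((d : ℝ) / 2)) *
          (C * exp (-((1 - δ) * (gammaAlpha α * (t ^ (-α) * s) ^ (1 / (1 - α)))))) := by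
        gcongr
        exact hC _ hz
    _ = C * (exp (s - r ^ 2 / (4 * s) -
          (1 - δ) * (gammaAlpha α * (t ^ (-α) * s) ^ (1 / (1 - α)))) /
            (4 * π * s) ^ ((d : ℝ) / 2)) := by
        simp only [neg_div, exp_sub, exp_neg]
        ring
    _ ≤ C * (exp ((1 - δ) * (b - m * √A) * t - (m ^ 2 * δ / (4 * s) + δ * A * s)) /
            (4 * π * s) ^ ((d : ℝ) / 2)) := by gcongr
    _ = C * (exp (-(m ^ 2 * δ / (4 * s))) / (4 * π * s) ^ ((d : ℝ) / 2)) *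
          exp ((1 - δ) * (b - m * √A) * t) * exp (-(δ * A) * s) := by
        rw [sub_eq_add_neg, neg_add, exp_add, exp_add, neg_mul]
        ring
    _ ≤ C * K * exp ((1 - δ) * (b - m * √A) * t) * exp (-(δ * A) * s) := by gcongr

lemma exists_abs_fundSol_le {α b m δ : ℝ} (d : ℕ) (hα : α ∈ Set.Ioo 0 1) (hb : 0 ≤ b)
    (hm : 0 < m) (hδ : δ ∈ Set.Ioc 0 1) (hA : 0 < (1 - δ) * b ^ α - 1) :
    ∃ C, ∀ t (x : EuclideanSpace ℝ (Fin d)), 1 ≤ t → m * t ≤ ‖x‖ →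
      |fundSol α d t x| ≤ C * exp ((1 - δ) * (b - m * √((1 - δ) * b ^ α - 1)) * t) := by
  obtain ⟨C, hC⟩ := exists_abs_fundSol_integrand_le d hα hb hm hδ hA.le
  set A := (1 - δ) * b ^ α - 1
  set g : ℝ → ℝ := fun t => exp ((1 - δ) * (b - m * √A) * t)
  have hint : IntegrableOn (fun s => exp (-(δ * A) * s)) (Set.Ioi 0) :=
    integrableOn_exp_mul_Ioi (neg_neg_of_pos (mul_pos hδ.1 hA)) 0
  refine ⟨C * ∫ s in Set.Ioi 0, exp (-(δ * A) * s), fun t x ht hx => ?_⟩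
  have htime : t ^ (-α) ≤ 1 := rpow_le_one_of_one_le_of_nonpos ht (neg_nonpos.2 hα.1.le)
  rw [fundSol, ← norm_eq_abs, norm_mul, norm_of_nonneg (by positivity)]
  refine (mul_le_of_le_one_left (norm_nonneg _) htime).trans
    ((norm_integral_le_of_norm_le (hint.const_mul (C * g t))
      ((ae_restrict_mem measurableSet_Ioi).mono fun s hs => hC t ‖x‖ s ht hx hs)).trans_eq ?_)
  rw [integral_const_mul]
  ring

/-- The parameter `b` minimising `b / √(b ^ α - 1)`, the speed beyond which linearising the
exponent of the Wright function at `b` yields exponential decay. -/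
noncomputable def criticalParam (α : ℝ) : ℝ := (2 / (2 - α)) ^ (1 / α)

/-- The minimum of `b / √(b ^ α - 1)` over `b > 1`, the speed beyond which the fundamental solution
decays exponentially. -/
noncomputable def criticalSpeed (α : ℝ) : ℝ := criticalParam α * √((2 - α) / α)

lemma criticalParam_rpow {α : ℝ} (hα : α ∈ Set.Ioo 0 1) :
    criticalParam α ^ α = 2 / (2 - α) := by
  have : 0 < 2 - α := by linarith [hα.2]
  rw [criticalParam, ← rpow_mul (by positivity), one_div_mul_cancel hα.1.ne', rpow_one]

lemma one_le_criticalParam {α : ℝ} (hα : α ∈ Set.Ioo 0 1) : 1 ≤ criticalParam α := by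
  refine one_le_rpow ?_ (one_div_pos.2 hα.1).le
  rw [one_le_div (by linarith [hα.2])]
  linarith [hα.1]

lemma criticalParam_lt_mul_sqrt {α m : ℝ} (hα : α ∈ Set.Ioo 0 1) (hm : criticalSpeed α < m) :
    criticalParam α < m * √(criticalParam α ^ α - 1) := by
  have hα₀ := hα.1
  have hα₂ : 0 < 2 - α := by linarith [hα.2]
  have hinv : criticalParam α ^ α - 1 = ((2 - α) / α)⁻¹ := by
    rw [criticalParam_rpow hα]
    field_simp
    ring
  rwa [hinv, sqrt_inv, ← div_eq_mul_inv, lt_div_iff₀ (by positivity)]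

lemma exists_criticalParam_lt_mul_sqrt {α m : ℝ} (hα : α ∈ Set.Ioo 0 1)
    (hm : criticalSpeed α < m) :
    ∃ δ ∈ Set.Ioo (0 : ℝ) 1, criticalParam α < m * √((1 - δ) * criticalParam α ^ α - 1) := by
  have hlim : Tendsto (fun δ => m * √((1 - δ) * criticalParam α ^ α - 1)) (𝓝[>] 0)
      (𝓝 (m * √(criticalParam α ^ α - 1))) := by
    have hcont : Continuous fun δ => m * √((1 - δ) * criticalParam α ^ α - 1) := by fun_prop
    simpa using (hcont.tendsto 0).mono_left nhdsWithin_le_nhds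
  obtain ⟨δ, hlt, hδ⟩ := ((hlim.eventually_const_lt (criticalParam_lt_mul_sqrt hα hm)).and
    (Ioo_mem_nhdsGT one_pos)).exists
  exact ⟨δ, hδ, hlt⟩

lemma criticalSpeed_pos {α : ℝ} (hα : α ∈ Set.Ioo 0 1) : 0 < criticalSpeed α :=
  mul_pos (one_pos.trans_le (one_le_criticalParam hα))
    (sqrt_pos.2 (div_pos (by linarith [hα.2]) hα.1))

/-- The ratio `s / t` at which the exponent `s - (ct)² / (4s) - γ_α (t^{-α} s)^{1 / (1 - α)}` of
the subordination integral reaches its maximal value `0` when `c` is the critical speed. -/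
noncomputable def criticalRatio (α : ℝ) : ℝ := criticalParam α ^ (1 - α) / α

lemma one_le_criticalRatio {α : ℝ} (hα : α ∈ Set.Ioo 0 1) : 1 ≤ criticalRatio α :=
  (one_le_div hα.1).2
    (hα.2.le.trans (one_le_rpow (one_le_criticalParam hα) (sub_pos.2 hα.2).le))

lemma criticalRatio_eq {α : ℝ} (hα : α ∈ Set.Ioo 0 1) :
    criticalRatio α = criticalParam α * (2 - α) / (2 * α) := by
  have hb : 0 < criticalParam α := one_pos.trans_le (one_le_criticalParam hα)
  rw [criticalRatio, rpow_sub hb, rpow_one, criticalParam_rpow hα]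
  field_simp

lemma gammaAlpha_mul_criticalRatio_rpow {α : ℝ} (hα : α ∈ Set.Ioo 0 1) :
    gammaAlpha α * criticalRatio α ^ (1 / (1 - α)) = (1 - α) / α * criticalParam α :=
  gammaAlpha_mul_rpow_saddle hα (one_pos.trans_le (one_le_criticalParam hα))

lemma criticalRatio_le {α : ℝ} (hα : α ∈ Set.Ioo 0 1) :
    criticalRatio α ≤ (2 / gammaAlpha α) ^ ((1 - α) / α) := by
  have hα₀ := hα.1
  have hα₁ : 0 < 1 - α := sub_pos.2 hα.2
  have hb : 0 < criticalParam α := one_pos.trans_le (one_le_criticalParam hα)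
  have hσ : 0 < criticalRatio α := one_pos.trans_le (one_le_criticalRatio hα)
  have hexp : criticalRatio α ^ (1 / (1 - α)) =
      criticalRatio α ^ (α / (1 - α)) * criticalRatio α := by
    rw [← rpow_add_one hσ.ne']
    congr 1
    field_simp
    ring
  have hpow : criticalRatio α ^ (α / (1 - α)) ≤ 2 / gammaAlpha α := by
    refine (le_div_iff₀ (gammaAlpha_pos hα)).2 (le_of_mul_le_mul_right ?_ hσ)
    calc criticalRatio α ^ (α / (1 - α)) * gammaAlpha α * criticalRatio α
        = (1 - α) / α * criticalParam α := by
          rw [← gammaAlpha_mul_criticalRatio_rpow hα, hexp]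
          ring
      _ ≤ (2 - α) / α * criticalParam α := by gcongr; norm_num
      _ = 2 * criticalRatio α := by
          rw [criticalRatio_eq hα]
          field_simp
  calc criticalRatio α = (criticalRatio α ^ (α / (1 - α))) ^ ((1 - α) / α) := by
        rw [← rpow_mul hσ.le, div_mul_div_cancel₀ hα₁.ne', div_self hα₀.ne', rpow_one]
    _ ≤ (2 / gammaAlpha α) ^ ((1 - α) / α) := by gcongr

lemma criticalSpeed_sq_le {α : ℝ} (hα : α ∈ Set.Ioo 0 1) :
    criticalSpeed α ^ 2 ≤ 4 * (criticalRatio α * (criticalRatio α - gammaAlpha α)) := by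
  have hα₀ := hα.1
  have hα₁ : 0 < 1 - α := sub_pos.2 hα.2
  have hα₂ : 0 < 2 - α := by linarith
  have hσ := one_le_criticalRatio hα
  have hγ : gammaAlpha α ≤ (1 - α) / α * criticalParam α := by
    rw [← gammaAlpha_mul_criticalRatio_rpow hα]
    exact le_mul_of_one_le_right (gammaAlpha_pos hα).le (one_le_rpow hσ (by positivity))
  calc criticalSpeed α ^ 2
      = 4 * (criticalRatio α * (criticalRatio α - (1 - α) / α * criticalParam α)) := by
        rw [criticalSpeed, mul_pow, sq_sqrt (by positivity), criticalRatio_eq hα]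
        field_simp
        ring
    _ ≤ 4 * (criticalRatio α * (criticalRatio α - gammaAlpha α)) := by gcongr

lemma rpow_lt_Malpha (α : ℝ) : (2 / gammaAlpha α) ^ ((1 - α) / α) < Malpha α :=
  Nat.sInf_mem (s := {n : ℕ | (2 / gammaAlpha α) ^ ((1 - α) / α) < (n : ℝ)})
    (exists_nat_gt ((2 / gammaAlpha α) ^ ((1 - α) / α)))

lemma criticalSpeed_le {α : ℝ} (hα : α ∈ Set.Ioo 0 1) :
    criticalSpeed α ≤ 2 * Malpha α * √(1 - gammaAlpha α / Malpha α) := by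
  have hσ := one_le_criticalRatio hα
  have hσM : criticalRatio α ≤ Malpha α := ((criticalRatio_le hα).trans_lt (rpow_lt_Malpha α)).le
  have hM : (0 : ℝ) < Malpha α := by linarith
  have hγ := gammaAlpha_lt_one hα
  refine le_of_sq_le_sq ?_ (by positivity)
  calc criticalSpeed α ^ 2 ≤ 4 * (criticalRatio α * (criticalRatio α - gammaAlpha α)) :=
        criticalSpeed_sq_le hα
    _ ≤ 4 * (Malpha α * (Malpha α - gammaAlpha α)) := by
        gcongr
        linarith
    _ = (2 * Malpha α * √(1 - gammaAlpha α / Malpha α)) ^ 2 := by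
        rw [mul_pow, sq_sqrt (sub_nonneg.2 ((div_le_one hM).2 (by linarith)))]
        field_simp
        ring

theorem stmt3_general {d : ℕ} {α m : ℝ} (hα : α ∈ Set.Ioo 0 1) (hm : criticalSpeed α < m)
    {x : ℝ → EuclideanSpace ℝ (Fin d)} (hx : ∀ᶠ t in atTop, m * t ≤ ‖x t‖) :
    Tendsto (fun t => fundSol α d t (x t)) atTop (𝓝 0) := by
  have hm₀ : 0 < m := (criticalSpeed_pos hα).trans hm
  have hb : 0 < criticalParam α := one_pos.trans_le (one_le_criticalParam hα)
  obtain ⟨δ, ⟨hδ₀, hδ₁⟩, hδ⟩ := exists_criticalParam_lt_mul_sqrt hα hm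
  have hA : 0 < (1 - δ) * criticalParam α ^ α - 1 :=
    sqrt_pos.1 (pos_of_mul_pos_right (hb.trans hδ) hm₀.le)
  obtain ⟨C, hC⟩ := exists_abs_fundSol_le d hα hb.le hm₀ ⟨hδ₀, hδ₁.le⟩ hA
  have hrate : (1 - δ) * (criticalParam α - m * √((1 - δ) * criticalParam α ^ α - 1)) < 0 :=
    mul_neg_of_pos_of_neg (sub_pos.2 hδ₁) (sub_neg.2 hδ)
  have hdecay := (tendsto_exp_atBot.comp (tendsto_id.const_mul_atTop_of_neg hrate)).const_mul C
  rw [mul_zero] at hdecay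
  refine squeeze_zero_norm' ?_ hdecay
  filter_upwards [hx, eventually_ge_atTop 1] with t hxt ht using hC t (x t) ht hxt

theorem stmt3 (d : ℕ) (hd : 1 ≤ d) (α m : ℝ) (hα : α ∈ Set.Ioo (0 : ℝ) 1)
    (hm : m > 2 * (Malpha α : ℝ) * Real.sqrt (1 - gammaAlpha α / (Malpha α : ℝ)))
    (v : EuclideanSpace ℝ (Fin d)) (hv : ‖v‖ = 1) :
    Tendsto (fun t : ℝ => fundSol α d t ((m * t) • v)) atTop (nhds 0) := by
  exact stmt3_general hα ((criticalSpeed_le hα).trans_lt hm) <|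
    .of_forall fun t => by simpa [norm_smul, hv, abs_mul] using le_abs_self (m * t)
end

section
/- Let α ∈ (0,1) and β > 0. Then for every z ∈ ℝ, E_{α,β}(z) = ∫_0^∞ e^{z s} W_{-α,β-α}(-s) ds. In particular, for α ∈ (0,1) and z ≥ 0, E_α(-z) = ∫_0^∞ e^{-z s} W_{-α,1-α}(-s) ds. -/
open Real MeasureTheory Filter Topology

/-- The two-parameter Mittag-Leffler function `E_{α,β}(z) = ∑ z^n / Γ(αn+β)`. -/
noncomputable def ML (a b z : ℝ) : ℝ :=
  ∑' n : ℕ, z ^ n / Real.Gamma (a * n + b)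

/-! Let the wedge contour consist of the rays `t = c + r e^{±iθ}`, `r ≥ 0`, with `π / 2 < θ < π`.
Hankel's formula `(2πi)⁻¹ ∫ e^t t^{-w} dt = 1 / Γ(w)` on this contour, together with the
expansions of `e^{z t^α}` and of `1 / (t^α - z)` in powers of `z`, represents the Wright function
as the integral of `e^t t^{-μ} e^{z t^α}` and the Mittag-Leffler function as the integral of
`e^t t^{α-β} / (t^α - z)`. If `αθ < π / 2` and `c` is large, then `Re t^α > |z|` on the contour,
and `∫_0^∞ e^{zs} e^{-s t^α} ds = 1 / (t^α - z)` turns the first integrand into the second.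

For Hankel's formula with `w ≤ -1`, the vertex `c` can be moved to `0`, where each ray gives a
Gamma integral along a complex direction and the reflection formula applies. Integrating the
derivative of `e^t t^p` gives the recurrence in `w` that reaches all `w ∉ ℕ`, and continuity in `w`
does the rest. -/

section GrowthEstimates

lemma eventually_mul_rpow_le_mul {α : ℝ} (hα : α < 1) (s : ℝ) {ε : ℝ} (hε : 0 < ε) :
    ∀ᶠ y : ℝ in atTop, s * y ^ α ≤ ε * y := by
  have hlim : Tendsto (fun y : ℝ => s * y ^ (-(1 - α))) atTop (𝓝 0) := by
    simpa using (tendsto_rpow_neg_atTop (sub_pos.2 hα)).const_mul s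
  filter_upwards [hlim.eventually_le_const hε, eventually_gt_atTop 0] with y hy hy0
  calc s * y ^ α = s * y ^ (-(1 - α)) * y := by
        rw [mul_assoc, ← Real.rpow_add_one hy0.ne']; ring_nf
    _ ≤ ε * y := by gcongr

lemma isBigO_rpow_mul_exp_mul_rpow {α : ℝ} (hα : α < 1) (p s : ℝ) {ε : ℝ} (hε : 0 < ε) :
    (fun y : ℝ => y ^ p * exp (s * y ^ α)) =O[atTop] fun y => exp (ε * y) := by
  have hexp : (fun y : ℝ => exp (s * y ^ α)) =O[atTop] fun y => exp (ε / 2 * y) := by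
    refine Asymptotics.IsBigO.of_bound' ?_
    filter_upwards [eventually_mul_rpow_le_mul hα s (half_pos hε)] with y hy
    simpa only [Real.norm_eq_abs, Real.abs_exp, exp_le_exp] using hy
  refine ((isLittleO_rpow_exp_pos_mul_atTop p (half_pos hε)).isBigO.mul hexp).congr_right
    fun y => ?_
  rw [← Real.exp_add]
  ring_nf

lemma integrableOn_exp_neg_mul_mul_rpow_mul_exp_rpow {b C α : ℝ} (hb : 0 < b) (hC : 0 < C)
    (hα : α < 1) (p s : ℝ) :
    IntegrableOn (fun r => exp (-b * r) * ((C + r) ^ p * exp (s * (C + r) ^ α)))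
      (Set.Ioi 0) := by
  refine integrable_of_isBigO_exp_neg (half_pos hb) ?_ ?_
  · have hne : ∀ r ∈ Set.Ici (0 : ℝ), C + r ≠ 0 := fun r hr =>
      (add_pos_of_pos_of_nonneg hC hr).ne'
    have hpow (q : ℝ) : ContinuousOn (fun r => (C + r) ^ q) (Set.Ici 0) :=
      ContinuousOn.rpow_const (by fun_prop) fun r hr => .inl (hne r hr)
    exact (Continuous.continuousOn (by fun_prop)).mul
      ((hpow p).mul (continuousOn_const.mul (hpow α)).rexp)
  · have hshift : (fun r => (C + r) ^ p * exp (s * (C + r) ^ α)) =O[atTop]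
        fun r => exp (b / 2 * r) := by
      refine ((isBigO_rpow_mul_exp_mul_rpow hα p s (half_pos hb)).comp_tendsto
        (tendsto_atTop_add_const_left atTop C tendsto_id)).trans ?_
      refine .of_bound (exp (b / 2 * C)) (.of_forall fun r => le_of_eq ?_)
      simp only [Function.comp_apply, id, Real.norm_eq_abs, Real.abs_exp, ← Real.exp_add]
      ring_nf
    refine ((Asymptotics.isBigO_refl _ _).mul hshift).congr_right fun r => ?_
    rw [← Real.exp_add]
    ring_nf

lemma rpow_le_rpow_add_rpow {x a b q : ℝ} (hx : 0 < x) (haq : a ≤ q) (hqb : q ≤ b) :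
    x ^ q ≤ x ^ a + x ^ b := by
  rcases le_total 1 x with h | h
  · exact (Real.rpow_le_rpow_of_exponent_le h hqb).trans
      (le_add_of_nonneg_left (by positivity))
  · exact (Real.rpow_le_rpow_of_exponent_ge hx h haq).trans
      (le_add_of_nonneg_right (by positivity))

end GrowthEstimates

section ComplexPowers

lemma cos_neg_of_mem_Ioo {θ : ℝ} (hθ : θ ∈ Set.Ioo (π / 2) π) : cos θ < 0 :=
  cos_neg_of_pi_div_two_lt_of_lt hθ.1 (by linarith [hθ.2, pi_pos])

lemma exp_ofReal_mul_I_cpow {θ : ℝ} (hθ : θ ∈ Set.Ioc (-π) π) (a : ℂ) :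
    Complex.exp (θ * Complex.I) ^ a = Complex.exp (θ * Complex.I * a) := by
  rw [Complex.cpow_def_of_ne_zero (Complex.exp_ne_zero _),
    Complex.log_exp (by simpa using hθ.1) (by simpa using hθ.2)]

lemma ofReal_mul_cpow {r : ℝ} (hr : 0 < r) {t : ℂ} (ht : t ≠ 0) (a : ℂ) :
    (r * t) ^ a = (r : ℂ) ^ a * t ^ a := by
  have hr0 : (r : ℂ) ≠ 0 := Complex.ofReal_ne_zero.2 hr.ne'
  rw [Complex.cpow_def_of_ne_zero (mul_ne_zero hr0 ht), Complex.cpow_def_of_ne_zero hr0,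
    Complex.cpow_def_of_ne_zero ht, Complex.log_ofReal_mul hr ht, add_mul, Complex.exp_add,
    Complex.ofReal_log hr.le]

lemma exp_mul_I_cpow_mul_one_div_neg_cpow {θ : ℝ} (hθ : θ ∈ Set.Ico 0 π) (a : ℝ) :
    Complex.exp (θ * Complex.I) ^ (a : ℂ) * (1 / -Complex.exp (θ * Complex.I)) ^ (a : ℂ) =
      Complex.exp ((π * a : ℝ) * Complex.I) := by
  have hinv : 1 / -Complex.exp (θ * Complex.I) = Complex.exp ((π - θ : ℝ) * Complex.I) := by
    rw [one_div, inv_neg, ← Complex.exp_neg]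
    push_cast
    rw [sub_mul, sub_eq_add_neg, Complex.exp_add, Complex.exp_pi_mul_I, neg_one_mul]
  rw [hinv, exp_ofReal_mul_I_cpow ⟨by linarith [pi_pos, hθ.1], hθ.2.le⟩,
    exp_ofReal_mul_I_cpow ⟨by linarith [pi_pos, hθ.2], by linarith [hθ.1]⟩, ← Complex.exp_add]
  push_cast
  ring_nf

end ComplexPowers

section GammaFunction

lemma inv_Gamma_one_sub {x : ℝ} (hx : 0 < x) :
    (Real.Gamma (1 - x))⁻¹ = 1 / π * (sin (π * x) * Real.Gamma x) := by
  rw [← inv_inj, inv_inv]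
  have h := Real.Gamma_mul_Gamma_one_sub x
  rw [mul_inv, mul_inv, one_div, inv_inv, ← mul_assoc, ← div_eq_mul_inv π, ← h]
  field_simp [(Real.Gamma_pos_of_pos hx).ne']

lemma continuous_inv_Gamma : Continuous fun x : ℝ => (Real.Gamma x)⁻¹ := by
  refine (Complex.continuous_re.comp
    (Complex.differentiable_one_div_Gamma.continuous.comp Complex.continuous_ofReal)).congr
    fun x => ?_
  rw [Function.comp_apply, Function.comp_apply, Complex.Gamma_ofReal, ← Complex.ofReal_inv,
    Complex.ofReal_re]

open Complex in
lemma differentiableAt_integral_cpow_mul_exp_neg_mul_Ioi {a w : ℂ} (ha : 0 < a.re)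
    (hw : 0 < w.re) :
    DifferentiableAt ℂ
      (fun w : ℂ => ∫ t : ℝ in Set.Ioi 0, (t : ℂ) ^ (a - 1) * cexp (-(w * t))) w := by
  have hdom {s b : ℝ} (hs : -1 < s) (hb : 0 < b) :
      IntegrableOn (fun t : ℝ => t ^ s * Real.exp (-(b * t))) (Set.Ioi 0) := by
    simpa using integrableOn_rpow_mul_exp_neg_mul_rpow hs one_pos hb
  have hmeas (w : ℂ) : Measurable fun t : ℝ => (t : ℂ) ^ (a - 1) * cexp (-(w * t)) := by fun_prop
  have hnorm (w : ℂ) {t : ℝ} (ht : t ∈ Set.Ioi 0) :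
      ‖(t : ℂ) ^ (a - 1) * cexp (-(w * t))‖ = t ^ (a.re - 1) * Real.exp (-(w.re * t)) := by
    simp [Complex.norm_cpow_eq_rpow_re_of_pos ht, Complex.norm_exp]
  refine (hasDerivAt_integral_of_dominated_loc_of_deriv_le
    (F' := fun w t => (t : ℂ) ^ (a - 1) * cexp (-(w * t)) * -t)
    (bound := fun t => t ^ a.re * Real.exp (-(w.re / 2 * t)))
    ((isOpen_lt continuous_const continuous_re).mem_nhds (half_lt_self hw))
    (.of_forall fun w => (hmeas w).aestronglyMeasurable)
    ((hdom (s := a.re - 1) (by linarith) hw).mono' (hmeas w).aestronglyMeasurable ?_)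
    (by fun_prop) ?_ (hdom (by linarith) (half_pos hw)) ?_).2.differentiableAt
  · exact (ae_restrict_mem measurableSet_Ioi).mono fun t ht => (hnorm w ht).le
  · refine (ae_restrict_mem measurableSet_Ioi).mono fun t ht v hv => ?_
    have ht : 0 < t := ht
    have hv : w.re / 2 < v.re := hv
    rw [norm_mul, hnorm v ht, norm_neg, Complex.norm_of_nonneg ht.le, mul_right_comm,
      ← Real.rpow_add_one ht.ne', sub_add_cancel]
    gcongr
  · refine .of_forall fun t v _ => ?_
    exact ((hasDerivAt_mul_const (t : ℂ)).fun_neg.cexp.const_mul _).congr_deriv (by ring)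

open Complex in
lemma integral_cpow_mul_exp_neg_mul_Ioi_of_re_pos {a w : ℂ} (ha : 0 < a.re) (hw : 0 < w.re) :
    ∫ t : ℝ in Set.Ioi 0, (t : ℂ) ^ (a - 1) * cexp (-(w * t)) = (1 / w) ^ a * Gamma a := by
  have hopen : IsOpen {w : ℂ | 0 < w.re} := isOpen_lt continuous_const continuous_re
  have hleft : AnalyticOnNhd ℂ
      (fun w : ℂ => ∫ t : ℝ in Set.Ioi 0, (t : ℂ) ^ (a - 1) * cexp (-(w * t))) {w | 0 < w.re} :=
    DifferentiableOn.analyticOnNhd (fun w hw =>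
      (differentiableAt_integral_cpow_mul_exp_neg_mul_Ioi ha hw).differentiableWithinAt) hopen
  have hright : AnalyticOnNhd ℂ (fun w : ℂ => (1 / w) ^ a * Gamma a) {w | 0 < w.re} := by
    refine DifferentiableOn.analyticOnNhd (fun w hw => ?_) hopen
    have hw : 0 < w.re := hw
    have hw0 : w ≠ 0 := by rintro rfl; simp at hw
    have hinv : 1 / w ∈ slitPlane := .inl (by
      rw [one_div, inv_re]; exact div_pos hw (normSq_pos.2 hw0))
    exact (((differentiableAt_const 1).div differentiableAt_id hw0).cpow_const
      hinv |>.mul_const _).differentiableWithinAt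
  refine hleft.eqOn_of_preconnected_of_frequently_eq hright
    (convex_halfSpace_re_gt 0).isPreconnected (z₀ := 1) (by simp) ?_ hw
  have hreal : Tendsto (fun x : ℝ => (x : ℂ)) (𝓝[≠] 1) (𝓝[≠] 1) := by
    simpa using (hasDerivAt_id (1 : ℝ)).ofReal_comp.tendsto_nhdsNE (by simp)
  refine hreal.frequently (Eventually.frequently ?_)
  filter_upwards [nhdsWithin_le_nhds (lt_mem_nhds one_pos)] with x hx
  exact integral_cpow_mul_exp_neg_mul_Ioi ha hx

end GammaFunction

section Ray

/-- The ray `r ↦ c + r e^{iθ}`, `r ≥ 0`. For `π / 2 < θ < π` it is the upper half of the wedge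
contour on which Hankel's integral is evaluated. -/
noncomputable def ray (θ c r : ℝ) : ℂ := c + r * Complex.exp (θ * Complex.I)

variable {θ c r : ℝ}

lemma ray_re (θ c r : ℝ) : (ray θ c r).re = c + r * cos θ := by
  simp [ray, Complex.exp_ofReal_mul_I_re]

lemma ray_im (θ c r : ℝ) : (ray θ c r).im = r * sin θ := by
  simp [ray, Complex.exp_ofReal_mul_I_im]

lemma ray_zero_right (θ c : ℝ) : ray θ c 0 = c := by simp [ray]

@[fun_prop]
lemma continuous_ray (θ c : ℝ) : Continuous (ray θ c) := by unfold ray; fun_prop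

lemma hasDerivAt_ray (θ c r : ℝ) : HasDerivAt (ray θ c) (Complex.exp (θ * Complex.I)) r :=
  (((hasDerivAt_id r).ofReal_comp.mul_const _).const_add (c : ℂ)).congr_deriv (by simp)

lemma hasDerivAt_ray_vertex (θ c r : ℝ) : HasDerivAt (fun c => ray θ c r) 1 c :=
  (hasDerivAt_id c).ofReal_comp.add_const _

lemma norm_exp_ray (θ c r : ℝ) : ‖Complex.exp (ray θ c r)‖ = exp c * exp (cos θ * r) := by
  rw [Complex.norm_exp, ray_re, Real.exp_add, mul_comm r]

lemma norm_ray_le (hr : 0 ≤ r) : ‖ray θ c r‖ ≤ |c| + r :=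
  (norm_add_le _ _).trans_eq (by simp [Complex.norm_exp_ofReal_mul_I, abs_of_nonneg hr])

lemma cos_half_mul_le_norm_ray (θ c r : ℝ) : cos (θ / 2) * (c + r) ≤ ‖ray θ c r‖ := by
  have hcos : cos θ = 2 * cos (θ / 2) ^ 2 - 1 := by rw [← cos_two_mul]; ring_nf
  have hsq : ‖ray θ c r‖ ^ 2 = (c + r) ^ 2 - 4 * (c * r) * (1 - cos (θ / 2) ^ 2) := by
    rw [← Complex.normSq_eq_norm_sq, Complex.normSq_apply, ray_re, ray_im]
    linear_combination r ^ 2 * sin_sq_add_cos_sq θ + 2 * c * r * hcos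
  refine le_of_abs_le (abs_le_of_sq_le_sq ?_ (norm_nonneg _))
  rw [hsq]
  nlinarith [mul_nonneg (sq_nonneg (c - r)) (sub_nonneg.2 (cos_sq_le_one (θ / 2)))]

lemma norm_ray_pos (hθ : θ ∈ Set.Ioo (-π) π) (hc : 0 < c) (hr : 0 ≤ r) : 0 < ‖ray θ c r‖ := by
  have hcos : 0 < cos (θ / 2) := cos_pos_of_mem_Ioo ⟨by linarith [hθ.1], by linarith [hθ.2]⟩
  exact (by positivity : 0 < cos (θ / 2) * (c + r)).trans_le (cos_half_mul_le_norm_ray θ c r)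

lemma ray_ne_zero (hθ : θ ∈ Set.Ioo (-π) π) (hc : 0 < c) (hr : 0 ≤ r) : ray θ c r ≠ 0 :=
  norm_pos_iff.1 (norm_ray_pos hθ hc hr)

lemma norm_ray_rpow_le (hθ : θ ∈ Set.Ioo (-π) π) (hc : 0 < c) (hr : 0 ≤ r) (p : ℝ) :
    ‖ray θ c r‖ ^ p ≤ (1 + cos (θ / 2) ^ p) * (c + r) ^ p := by
  have hcos : 0 < cos (θ / 2) := cos_pos_of_mem_Ioo ⟨by linarith [hθ.1], by linarith [hθ.2]⟩
  rw [one_add_mul]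
  rcases le_total 0 p with hp | hp
  · refine le_add_of_le_of_nonneg (Real.rpow_le_rpow (norm_nonneg _) ?_ hp) (by positivity)
    simpa [abs_of_pos hc] using norm_ray_le (θ := θ) (c := c) hr
  · refine le_add_of_nonneg_of_le (by positivity) ?_
    rw [← Real.mul_rpow hcos.le (by positivity)]
    exact Real.rpow_le_rpow_of_nonpos (by positivity) (cos_half_mul_le_norm_ray θ c r) hp

lemma ray_mem_slitPlane (hθ : θ ∈ Set.Ioo 0 π) (hr : 0 < r) : ray θ c r ∈ Complex.slitPlane := by
  refine .inr ?_
  rw [ray_im]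
  exact (mul_pos hr (sin_pos_of_mem_Ioo hθ)).ne'

lemma abs_arg_ray_le (hθ : θ ∈ Set.Icc 0 π) (hc : 0 ≤ c) (hr : 0 ≤ r) (hne : ray θ c r ≠ 0) :
    |(ray θ c r).arg| ≤ θ := by
  have hle : ‖ray θ c r‖ ≤ c + r := by simpa [abs_of_nonneg hc] using norm_ray_le (c := c) hr
  have hge : r - c ≤ ‖ray θ c r‖ := by
    have h := norm_sub_le (ray θ c r) c
    simp only [ray, add_sub_cancel_left, norm_mul, Complex.norm_exp_ofReal_mul_I,
      Complex.norm_of_nonneg hr, Complex.norm_of_nonneg hc, mul_one] at h ⊢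
    linarith
  have hcos : cos θ ≤ cos |(ray θ c r).arg| := by
    rw [Real.cos_abs, Complex.cos_arg hne, ray_re, le_div_iff₀ (norm_pos_iff.2 hne)]
    rcases le_total 0 (cos θ) with h | h
    · nlinarith [cos_le_one θ]
    · nlinarith [neg_one_le_cos θ]
  exact (Real.strictAntiOn_cos.le_iff_ge hθ ⟨abs_nonneg _, Complex.abs_arg_le_pi _⟩).1 hcos

lemma re_ray_cpow_ge {α : ℝ} (hθ : θ ∈ Set.Ioo 0 π) (hα : 0 ≤ α) (hαθ : α * θ ≤ π / 2)
    (hc : 0 < c) (hr : 0 ≤ r) :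
    (cos (θ / 2) * c) ^ α * cos (α * θ) ≤ (ray θ c r ^ (α : ℂ)).re := by
  have hcos : 0 < cos (θ / 2) :=
    cos_pos_of_mem_Ioo ⟨by linarith [pi_pos, hθ.1], by linarith [hθ.2]⟩
  have hne : ray θ c r ≠ 0 := ray_ne_zero ⟨by linarith [pi_pos, hθ.1], hθ.2⟩ hc hr
  have hnorm : cos (θ / 2) * c ≤ ‖ray θ c r‖ :=
    le_trans (by gcongr; linarith) (cos_half_mul_le_norm_ray θ c r)
  have harg : cos (α * θ) ≤ cos ((ray θ c r).arg * α) := by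
    rw [← Real.cos_abs ((ray θ c r).arg * α), abs_mul, abs_of_nonneg hα, mul_comm _ α]
    exact cos_le_cos_of_nonneg_of_le_pi (by positivity) (by linarith [pi_pos])
      (mul_le_mul_of_nonneg_left (abs_arg_ray_le ⟨hθ.1.le, hθ.2.le⟩ hc.le hr hne) hα)
  have hcosα : 0 ≤ cos (α * θ) :=
    cos_nonneg_of_mem_Icc ⟨by linarith [pi_pos, mul_nonneg hα hθ.1.le], hαθ⟩
  rw [Complex.cpow_ofReal_re]
  gcongr

lemma exists_ray_forall_le_re_cpow {α : ℝ} (hα : α ∈ Set.Ioo 0 1) (M : ℝ) :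
    ∃ θ ∈ Set.Ioo (π / 2) π, ∃ c > 0, ∀ r ≥ 0, M ≤ (ray θ c r ^ (α : ℂ)).re := by
  have hpi := pi_pos
  obtain ⟨θ, hθ, hθ'⟩ : ∃ θ, π / 2 < θ ∧ θ < min π (π / 2 / α) := by
    refine exists_between (lt_min (by linarith) ?_)
    rw [lt_div_iff₀ hα.1]
    exact mul_lt_of_lt_one_right (by positivity) hα.2
  obtain ⟨hθπ, hθα⟩ := lt_min_iff.1 hθ'
  have hαθ : α * θ < π / 2 := by rwa [mul_comm, ← lt_div_iff₀ hα.1]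
  have hcosα : 0 < cos (α * θ) :=
    cos_pos_of_mem_Ioo ⟨by linarith [mul_pos hα.1 (by linarith : 0 < θ)], hαθ⟩
  have hcos : 0 < cos (θ / 2) := cos_pos_of_mem_Ioo ⟨by linarith, by linarith⟩
  have hlim : Tendsto (fun c => (cos (θ / 2) * c) ^ α * cos (α * θ)) atTop atTop :=
    ((tendsto_rpow_atTop hα.1).comp (tendsto_id.const_mul_atTop hcos)).atTop_mul_const hcosα
  obtain ⟨c, hcM, hc⟩ := ((hlim.eventually_ge_atTop M).and (eventually_gt_atTop 0)).exists
  exact ⟨θ, ⟨hθ, hθπ⟩, c, hc, fun r hr =>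
    hcM.trans (re_ray_cpow_ge ⟨by linarith, hθπ⟩ hα.1.le hαθ.le hc hr)⟩

end Ray

section WedgeIntegral

/-- The integral `(2πi)⁻¹ ∫ f(t) dt` over the wedge contour made of the ray `ray θ c` and its
complex conjugate, written for conjugation-symmetric `f` as `π⁻¹` times the imaginary part of
the integral over `ray θ c` alone. -/
noncomputable def wedgeIntegral (θ c : ℝ) (f : ℂ → ℂ) : ℝ :=
  1 / π * (∫ r in Set.Ioi (0 : ℝ), f (ray θ c r) * Complex.exp (θ * Complex.I)).im

variable {θ c : ℝ} {f g : ℂ → ℂ}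

lemma wedgeIntegral_ofReal_mul (θ c x : ℝ) (f : ℂ → ℂ) :
    wedgeIntegral θ c (fun t => x * f t) = x * wedgeIntegral θ c f := by
  simp only [wedgeIntegral, mul_assoc, integral_const_mul, Complex.im_ofReal_mul]
  ring

lemma wedgeIntegral_add (hf : IntegrableOn (fun r => f (ray θ c r)) (Set.Ioi 0))
    (hg : IntegrableOn (fun r => g (ray θ c r)) (Set.Ioi 0)) :
    wedgeIntegral θ c (fun t => f t + g t) = wedgeIntegral θ c f + wedgeIntegral θ c g := by
  simp only [wedgeIntegral, add_mul]
  rw [integral_add (hf.mul_const _) (hg.mul_const _), Complex.add_im, mul_add]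

lemma hasSum_wedgeIntegral {F : ℕ → ℂ → ℂ} {b : ℕ → ℝ → ℝ} {B : ℝ → ℝ}
    (hF : ∀ n, Measurable (F n)) (hFb : ∀ n, ∀ r > 0, ‖F n (ray θ c r)‖ ≤ b n r)
    (hb : ∀ r > 0, HasSum (fun n => b n r) (B r)) (hB : IntegrableOn B (Set.Ioi 0))
    (hFf : ∀ r > 0, HasSum (fun n => F n (ray θ c r)) (f (ray θ c r))) :
    HasSum (fun n => wedgeIntegral θ c (F n)) (wedgeIntegral θ c f) := by
  have h := hasSum_integral_of_dominated_convergence (μ := volume.restrict (Set.Ioi (0 : ℝ)))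
    (F := fun n r => F n (ray θ c r) * Complex.exp (θ * Complex.I))
    (f := fun r => f (ray θ c r) * Complex.exp (θ * Complex.I)) b
    (fun n => (((hF n).comp (continuous_ray θ c).measurable).mul_const _).aestronglyMeasurable)
    (fun n => (ae_restrict_mem measurableSet_Ioi).mono fun r hr => by
      simpa [Complex.norm_exp_ofReal_mul_I] using hFb n r hr)
    ((ae_restrict_mem measurableSet_Ioi).mono fun r hr => (hb r hr).summable)
    (hB.congr ((ae_restrict_mem measurableSet_Ioi).mono fun r hr => (hb r hr).tsum_eq.symm))
    ((ae_restrict_mem measurableSet_Ioi).mono fun r hr => (hFf r hr).mul_right _)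
  exact (h.mapL Complex.imCLM).mul_left _

lemma integral_ray_of_hasDerivAt {f' : ℂ → ℂ} (hcont : ContinuousAt f c)
    (hderiv : ∀ r > 0, HasDerivAt f (f' (ray θ c r)) (ray θ c r))
    (hf' : IntegrableOn (fun r => f' (ray θ c r)) (Set.Ioi 0))
    (hf : IntegrableOn (fun r => f (ray θ c r)) (Set.Ioi 0)) :
    ∫ r in Set.Ioi (0 : ℝ), f' (ray θ c r) * Complex.exp (θ * Complex.I) = -f c := by
  have hderiv_ray : ∀ r ∈ Set.Ioi (0 : ℝ), HasDerivAt (fun r => f (ray θ c r))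
      (f' (ray θ c r) * Complex.exp (θ * Complex.I)) r := fun r hr =>
    (hderiv r hr).comp r (hasDerivAt_ray θ c r)
  have hlim := tendsto_zero_of_hasDerivAt_of_integrableOn_Ioi hderiv_ray (hf'.mul_const _) hf
  have hcont_ray : ContinuousWithinAt (fun r => f (ray θ c r)) (Set.Ici 0) 0 := by
    refine (ContinuousAt.comp (g := f) ?_ (continuous_ray θ c).continuousAt).continuousWithinAt
    rwa [ray_zero_right]
  rw [integral_Ioi_of_hasDerivAt_of_tendsto hcont_ray hderiv_ray (hf'.mul_const _) hlim,
    ray_zero_right, zero_sub]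

lemma integrable_prod_exp_mul_ray {z ρ : ℝ} (hf : IntegrableOn (fun r => f (ray θ c r)) (Set.Ioi 0))
    (hg : Measurable g) (hz : z < ρ) (hρ : ∀ r > 0, ρ ≤ (g (ray θ c r)).re) :
    Integrable (Function.uncurry fun s r : ℝ =>
        f (ray θ c r) * Complex.exp ((z - g (ray θ c r)) * s))
      ((volume.restrict (Set.Ioi 0)).prod (volume.restrict (Set.Ioi 0))) := by
  have hdom := Integrable.mul_prod (integrableOn_exp_mul_Ioi (sub_neg.2 hz) 0) hf.norm
  refine hdom.mono' ?_ ?_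
  · have hgm : Measurable fun q : ℝ × ℝ => Complex.exp ((z - g (ray θ c q.2)) * q.1) := by
      fun_prop
    exact hf.aestronglyMeasurable.comp_snd.mul hgm.aestronglyMeasurable
  · rw [Measure.prod_restrict]
    refine (ae_restrict_mem (measurableSet_Ioi.prod measurableSet_Ioi)).mono ?_
    rintro ⟨s, r⟩ ⟨hs, hr⟩
    have hs : 0 < s := hs
    simp only [Function.uncurry_apply_pair, norm_mul, Complex.norm_exp, Complex.re_mul_ofReal,
      Complex.sub_re, Complex.ofReal_re]
    rw [mul_comm]
    gcongr
    exact hρ r hr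

lemma integral_exp_mul_wedgeIntegral {z ρ : ℝ}
    (hf : IntegrableOn (fun r => f (ray θ c r)) (Set.Ioi 0)) (hg : Measurable g) (hz : z < ρ)
    (hρ : ∀ r > 0, ρ ≤ (g (ray θ c r)).re) :
    ∫ s in Set.Ioi (0 : ℝ), exp (z * s) *
        wedgeIntegral θ c (fun t => f t * Complex.exp ((-s : ℝ) * g t)) =
      wedgeIntegral θ c (fun t => f t / (g t - z)) := by
  set H : ℝ → ℝ → ℂ := fun s r =>
    f (ray θ c r) * Complex.exp ((z - g (ray θ c r)) * s) * Complex.exp (θ * Complex.I) with hH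
  have hHint := (integrable_prod_exp_mul_ray hf hg hz hρ).mul_const (Complex.exp (θ * Complex.I))
  have houter (s : ℝ) : exp (z * s) *
      wedgeIntegral θ c (fun t => f t * Complex.exp ((-s : ℝ) * g t)) =
      1 / π * (∫ r in Set.Ioi (0 : ℝ), H s r).im := by
    rw [← wedgeIntegral_ofReal_mul]
    simp only [wedgeIntegral, hH]
    congr 3 with r
    rw [sub_mul, sub_eq_add_neg, Complex.exp_add]
    push_cast
    ring_nf
  have hinner : ∀ r ∈ Set.Ioi (0 : ℝ), ∫ s in Set.Ioi (0 : ℝ), H s r =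
      f (ray θ c r) / (g (ray θ c r) - z) * Complex.exp (θ * Complex.I) := fun r hr => by
    have hre : ((z : ℂ) - g (ray θ c r)).re < 0 := by
      rw [Complex.sub_re, Complex.ofReal_re]; linarith [hρ r hr]
    simp only [hH]
    rw [integral_mul_const, integral_const_mul, integral_exp_mul_complex_Ioi hre,
      Complex.ofReal_zero, mul_zero, Complex.exp_zero, neg_div, ← div_neg, neg_sub, mul_one_div]
  calc _ = 1 / π * ∫ s in Set.Ioi (0 : ℝ), (∫ r in Set.Ioi (0 : ℝ), H s r).im := by
        simp only [houter, integral_const_mul]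
    _ = 1 / π * (∫ s in Set.Ioi (0 : ℝ), ∫ r in Set.Ioi (0 : ℝ), H s r).im :=
        congrArg (1 / π * ·) (integral_im (𝕜 := ℂ) hHint.integral_prod_left)
    _ = 1 / π * (∫ r in Set.Ioi (0 : ℝ), ∫ s in Set.Ioi (0 : ℝ), H s r).im := by
        rw [integral_integral_swap hHint]
    _ = _ := by rw [setIntegral_congr_fun measurableSet_Ioi hinner]; rfl

end WedgeIntegral

section Hankel

/-- The function `e^t t^p`, whose wedge integral is Hankel's integral for `1 / Γ(-p)`. -/
noncomputable def hankelKernel (p : ℝ) (t : ℂ) : ℂ := Complex.exp t * t ^ (p : ℂ)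

variable {θ c : ℝ}

@[fun_prop]
lemma measurable_hankelKernel (p : ℝ) : Measurable (hankelKernel p) := by
  unfold hankelKernel; fun_prop

lemma hankelKernel_ofReal (p : ℝ) {x : ℝ} (hx : 0 ≤ x) :
    hankelKernel p x = (exp x * x ^ p : ℝ) := by
  simp [hankelKernel, Complex.ofReal_cpow hx]

lemma hankelKernel_add_natCast_mul (p α : ℝ) (n : ℕ) {t : ℂ} (ht : t ≠ 0) :
    hankelKernel (p + n * α) t = hankelKernel p t * (t ^ (α : ℂ)) ^ n := by
  rw [hankelKernel, hankelKernel, mul_assoc, ← Complex.cpow_nat_mul, ← Complex.cpow_add _ _ ht]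
  push_cast
  rfl

lemma hasDerivAt_hankelKernel (p : ℝ) {t : ℂ} (ht : t ∈ Complex.slitPlane) :
    HasDerivAt (hankelKernel p) (hankelKernel p t + p * hankelKernel (p - 1) t) t := by
  refine ((Complex.hasDerivAt_exp t).mul
    (Complex.hasStrictDerivAt_cpow_const ht).hasDerivAt).congr_deriv ?_
  simp only [hankelKernel, Complex.ofReal_sub, Complex.ofReal_one]
  ring

lemma continuousAt_hankelKernel_ofReal {p x : ℝ} (hp : 0 < p) (hx : 0 ≤ x) :
    ContinuousAt (hankelKernel p) x :=
  Complex.continuous_exp.continuousAt.mul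
    (Complex.continuousAt_cpow_const_of_re_pos (.inl hx) hp)

lemma norm_hankelKernel_ray (p θ c r : ℝ) :
    ‖hankelKernel p (ray θ c r)‖ = exp c * (exp (cos θ * r) * ‖ray θ c r‖ ^ p) := by
  rw [hankelKernel, norm_mul, norm_exp_ray, Complex.norm_cpow_real, mul_assoc]

lemma integrableOn_norm_hankelKernel_ray_mul_exp {α s : ℝ} (hθ : θ ∈ Set.Ioo (π / 2) π)
    (hc : 0 < c) (p : ℝ) (hα : α ∈ Set.Ico 0 1) (hs : 0 ≤ s) :
    IntegrableOn (fun r => ‖hankelKernel p (ray θ c r)‖ * exp (s * ‖ray θ c r‖ ^ α))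
      (Set.Ioi 0) := by
  have hdom := (integrableOn_exp_neg_mul_mul_rpow_mul_exp_rpow
    (neg_pos.2 (cos_neg_of_mem_Ioo hθ)) hc hα.2 p s).const_mul (exp c * (1 + cos (θ / 2) ^ p))
  refine hdom.mono' (Measurable.aestronglyMeasurable (by fun_prop)) ?_
  refine (ae_restrict_mem measurableSet_Ioi).mono fun r hr => ?_
  have hr : 0 ≤ r := (Set.mem_Ioi.1 hr).le
  have hle : ‖ray θ c r‖ ≤ c + r := by simpa [abs_of_pos hc] using norm_ray_le (c := c) hr
  have hpow := norm_ray_rpow_le ⟨by linarith [hθ.1, pi_pos], hθ.2⟩ hc hr p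
  have hcos : 0 ≤ cos (θ / 2) :=
    cos_nonneg_of_mem_Icc ⟨by linarith [hθ.1, pi_pos], by linarith [hθ.2]⟩
  have hα0 := hα.1
  rw [Real.norm_of_nonneg (by positivity), norm_hankelKernel_ray, neg_neg]
  calc _ ≤ exp c * (exp (cos θ * r) * ((1 + cos (θ / 2) ^ p) * (c + r) ^ p)) *
        exp (s * (c + r) ^ α) := by gcongr
    _ = _ := by ring

lemma integrableOn_hankelKernel_ray (hθ : θ ∈ Set.Ioo (π / 2) π) (hc : 0 < c) (p : ℝ) :
    IntegrableOn (fun r => hankelKernel p (ray θ c r)) (Set.Ioi 0) := by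
  refine (integrable_norm_iff (Measurable.aestronglyMeasurable (by fun_prop))).1 ?_
  simpa [IntegrableOn] using
    integrableOn_norm_hankelKernel_ray_mul_exp hθ hc p ⟨le_rfl, one_pos⟩ le_rfl

lemma norm_hankelKernel_ray_le {C p r : ℝ} (hc : |c| ≤ C) (hp : 0 ≤ p) (hr : 0 ≤ r) :
    ‖hankelKernel p (ray θ c r)‖ ≤ exp C * (exp (cos θ * r) * (C + r) ^ p) := by
  rw [norm_hankelKernel_ray]
  have hcC : c ≤ C := (le_abs_self c).trans hc
  have hle : ‖ray θ c r‖ ≤ C + r := (norm_ray_le hr).trans (by gcongr)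
  gcongr

lemma norm_hankelKernel_ray_add_mul_le {C p r : ℝ} (hc : |c| ≤ C) (hp : 1 ≤ p) (hr : 0 ≤ r) :
    ‖hankelKernel p (ray θ c r) + p * hankelKernel (p - 1) (ray θ c r)‖ ≤
      exp C * (exp (cos θ * r) * (C + r) ^ p) +
        p * (exp C * (exp (cos θ * r) * (C + r) ^ (p - 1))) := by
  refine (norm_add_le _ _).trans (add_le_add (norm_hankelKernel_ray_le hc (by linarith) hr) ?_)
  rw [norm_mul, Complex.norm_of_nonneg (by linarith : 0 ≤ p)]
  exact mul_le_mul_of_nonneg_left (norm_hankelKernel_ray_le hc (by linarith) hr) (by linarith)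

lemma integrableOn_exp_cos_mul_rpow (hθ : θ ∈ Set.Ioo (π / 2) π) {C : ℝ} (hC : 0 < C) (p : ℝ) :
    IntegrableOn (fun r => exp C * (exp (cos θ * r) * (C + r) ^ p)) (Set.Ioi 0) := by
  simpa [IntegrableOn] using (integrableOn_exp_neg_mul_mul_rpow_mul_exp_rpow
    (neg_pos.2 (cos_neg_of_mem_Ioo hθ)) hC one_half_lt_one p 0).const_mul (exp C)

lemma integrableOn_hankelKernel_ray_of_nonneg (hθ : θ ∈ Set.Ioo (π / 2) π) (c : ℝ) {p : ℝ}
    (hp : 0 ≤ p) : IntegrableOn (fun r => hankelKernel p (ray θ c r)) (Set.Ioi 0) :=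
  (integrableOn_exp_cos_mul_rpow hθ (by positivity : 0 < |c| + 1) p).mono'
    (Measurable.aestronglyMeasurable (by fun_prop))
    ((ae_restrict_mem measurableSet_Ioi).mono fun _ hr =>
      norm_hankelKernel_ray_le (by linarith) hp (Set.mem_Ioi.1 hr).le)

lemma wedgeIntegral_deriv_hankelKernel {p : ℝ} (hθ : θ ∈ Set.Ioo 0 π) (hc : 0 ≤ c)
    (hcont : ContinuousAt (hankelKernel p) c)
    (hint : IntegrableOn (fun r => hankelKernel p (ray θ c r)) (Set.Ioi 0))
    (hint' : IntegrableOn (fun r => hankelKernel (p - 1) (ray θ c r)) (Set.Ioi 0)) :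
    wedgeIntegral θ c (fun t => hankelKernel p t + p * hankelKernel (p - 1) t) = 0 := by
  rw [wedgeIntegral, integral_ray_of_hasDerivAt
    (f' := fun t => hankelKernel p t + p * hankelKernel (p - 1) t) hcont
    (fun r hr => hasDerivAt_hankelKernel p (ray_mem_slitPlane hθ hr))
    (hint.add (hint'.const_mul _)) hint, hankelKernel_ofReal p hc, ← Complex.ofReal_neg,
    Complex.ofReal_im, mul_zero]

lemma wedgeIntegral_hankelKernel_add_mul (hθ : θ ∈ Set.Ioo (π / 2) π) (hc : 0 < c) (p : ℝ) :
    wedgeIntegral θ c (hankelKernel p) + p * wedgeIntegral θ c (hankelKernel (p - 1)) = 0 := by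
  have hint := integrableOn_hankelKernel_ray hθ hc
  rw [← wedgeIntegral_ofReal_mul, ← wedgeIntegral_add (hint p)
    (g := fun t => p * hankelKernel (p - 1) t) ((hint (p - 1)).const_mul _)]
  exact wedgeIntegral_deriv_hankelKernel ⟨by linarith [hθ.1, pi_pos], hθ.2⟩ hc.le
    (hasDerivAt_hankelKernel p (Complex.ofReal_mem_slitPlane.2 hc)).continuousAt
    (hint p) (hint (p - 1))

lemma hasDerivAt_hankelKernel_ray_vertex {r : ℝ} (hθ : θ ∈ Set.Ioo 0 π) (hr : 0 < r) (p c : ℝ) :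
    HasDerivAt (fun c => hankelKernel p (ray θ c r))
      (hankelKernel p (ray θ c r) + p * hankelKernel (p - 1) (ray θ c r)) c := by
  have h := (hasDerivAt_hankelKernel p (ray_mem_slitPlane (c := c) hθ hr)).comp c
    (hasDerivAt_ray_vertex θ c r)
  rwa [mul_one] at h

lemma hasDerivAt_wedgeIntegral_hankelKernel_vertex {p : ℝ} (hθ : θ ∈ Set.Ioo (π / 2) π)
    (hc : 0 ≤ c) (hp : 1 ≤ p) :
    HasDerivAt (fun c => wedgeIntegral θ c (hankelKernel p)) 0 c := by
  have hθ0 : θ ∈ Set.Ioo 0 π := ⟨by linarith [hθ.1, pi_pos], hθ.2⟩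
  have hint (q : ℝ) (hq : 0 ≤ q) := integrableOn_hankelKernel_ray_of_nonneg hθ c hq
  have hdom (q : ℝ) := integrableOn_exp_cos_mul_rpow hθ (by positivity : 0 < c + 1) q
  have h := (hasDerivAt_integral_of_dominated_loc_of_deriv_le
    (μ := volume.restrict (Set.Ioi (0 : ℝ)))
    (F := fun c r => hankelKernel p (ray θ c r) * Complex.exp (θ * Complex.I))
    (F' := fun c r => (hankelKernel p (ray θ c r) + p * hankelKernel (p - 1) (ray θ c r)) *
      Complex.exp (θ * Complex.I))
    (Metric.ball_mem_nhds c one_pos)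
    (.of_forall fun x => Measurable.aestronglyMeasurable (by fun_prop))
    ((hint p (by linarith)).mul_const _)
    (Measurable.aestronglyMeasurable (by fun_prop)) ?_
    ((hdom p).add ((hdom (p - 1)).const_mul p)) ?_).2
  · have him := (Complex.imCLM.hasFDerivAt.comp_hasDerivAt c h).const_mul (1 / π)
    exact him.congr_deriv (wedgeIntegral_deriv_hankelKernel hθ0 hc
      (continuousAt_hankelKernel_ofReal (by linarith) hc) (hint p (by linarith))
      (hint (p - 1) (by linarith)))
  · refine (ae_restrict_mem measurableSet_Ioi).mono fun r hr x hx => ?_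
    have hr : 0 ≤ r := (Set.mem_Ioi.1 hr).le
    have hx : |x| ≤ c + 1 := by
      rw [Metric.mem_ball, Real.dist_eq, abs_lt] at hx
      exact abs_le.2 ⟨by linarith, by linarith⟩
    rw [norm_mul, Complex.norm_exp_ofReal_mul_I, mul_one]
    exact norm_hankelKernel_ray_add_mul_le hx hp hr
  · exact (ae_restrict_mem measurableSet_Ioi).mono fun r hr x _ =>
      (hasDerivAt_hankelKernel_ray_vertex hθ0 hr p x).mul_const _

lemma wedgeIntegral_hankelKernel_eq_vertex_zero {p : ℝ} (hθ : θ ∈ Set.Ioo (π / 2) π) (hc : 0 ≤ c)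
    (hp : 1 ≤ p) :
    wedgeIntegral θ c (hankelKernel p) = wedgeIntegral θ 0 (hankelKernel p) :=
  constant_of_has_deriv_right_zero
    (fun _ hx => (hasDerivAt_wedgeIntegral_hankelKernel_vertex hθ hx.1
      hp).continuousAt.continuousWithinAt)
    (fun _ hx => (hasDerivAt_wedgeIntegral_hankelKernel_vertex hθ hx.1 hp).hasDerivWithinAt)
    c ⟨hc, le_rfl⟩

lemma wedgeIntegral_hankelKernel_vertex_zero {p : ℝ} (hθ : θ ∈ Set.Ioo (π / 2) π) (hp : -1 < p) :
    wedgeIntegral θ 0 (hankelKernel p) = (Real.Gamma (-p))⁻¹ := by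
  have hpi := pi_pos
  set u : ℂ := Complex.exp (θ * Complex.I) with hu
  have hu0 : u ≠ 0 := Complex.exp_ne_zero _
  have hure : 0 < (-u).re := by
    rw [Complex.neg_re, hu, Complex.exp_ofReal_mul_I_re]
    exact neg_pos.2 (cos_neg_of_mem_Ioo hθ)
  have hintegrand : ∀ r ∈ Set.Ioi (0 : ℝ), hankelKernel p (ray θ 0 r) * u =
      u ^ ((p + 1 : ℝ) : ℂ) * ((r : ℂ) ^ (((p + 1 : ℝ) : ℂ) - 1) * Complex.exp (-(-u * r))) := by
    intro r hr
    have hray : ray θ 0 r = r * u := by simp [ray, hu]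
    have hpow : u ^ ((p + 1 : ℝ) : ℂ) = u ^ (p : ℂ) * u := by
      rw [Complex.ofReal_add, Complex.ofReal_one, Complex.cpow_add _ _ hu0, Complex.cpow_one]
    rw [hray, hankelKernel, ofReal_mul_cpow hr hu0, hpow]
    push_cast
    ring_nf
  rw [wedgeIntegral, setIntegral_congr_fun measurableSet_Ioi hintegrand, integral_const_mul,
    integral_cpow_mul_exp_neg_mul_Ioi_of_re_pos (by simpa using by linarith) hure, ← mul_assoc,
    exp_mul_I_cpow_mul_one_div_neg_cpow ⟨by linarith [hθ.1], hθ.2⟩,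
    Complex.Gamma_ofReal, Complex.im_mul_ofReal, Complex.exp_ofReal_mul_I_im,
    ← inv_Gamma_one_sub (by linarith)]
  ring_nf

lemma continuous_wedgeIntegral_hankelKernel (hθ : θ ∈ Set.Ioo (π / 2) π) (hc : 0 < c) :
    Continuous fun p => wedgeIntegral θ c (hankelKernel p) := by
  have hpos {r : ℝ} (hr : r ∈ Set.Ioi 0) : 0 < ‖ray θ c r‖ :=
    norm_ray_pos ⟨by linarith [hθ.1, pi_pos], hθ.2⟩ hc (Set.mem_Ioi.1 hr).le
  have hint (p : ℝ) := (integrableOn_hankelKernel_ray hθ hc p).norm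
  suffices hcont : Continuous fun p => ∫ r in Set.Ioi (0 : ℝ),
      hankelKernel p (ray θ c r) * Complex.exp (θ * Complex.I) from
    continuous_const.mul (Complex.continuous_im.comp hcont)
  refine continuous_iff_continuousAt.2 fun p => continuousAt_of_dominated
    (.of_forall fun q => Measurable.aestronglyMeasurable (by fun_prop)) ?_
    ((hint (p - 1)).add (hint (p + 1))) ?_
  · filter_upwards [Icc_mem_nhds (sub_one_lt p) (lt_add_one p)] with q hq
    refine (ae_restrict_mem measurableSet_Ioi).mono fun r hr => ?_
    simp only [Pi.add_apply, norm_mul, Complex.norm_exp_ofReal_mul_I, mul_one,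
      norm_hankelKernel_ray, ← mul_add]
    gcongr
    exact rpow_le_rpow_add_rpow (hpos hr) hq.1 hq.2
  · refine (ae_restrict_mem measurableSet_Ioi).mono fun r hr => ?_
    have hpow : Continuous fun q : ℝ => ray θ c r ^ (q : ℂ) :=
      Complex.continuous_ofReal.const_cpow (.inl (norm_pos_iff.1 (hpos hr)))
    exact ((continuous_const.mul hpow).mul continuous_const).continuousAt

lemma wedgeIntegral_hankelKernel_neg (hθ : θ ∈ Set.Ioo (π / 2) π) (hc : 0 < c) (w : ℝ) :
    wedgeIntegral θ c (hankelKernel (-w)) = (Real.Gamma w)⁻¹ := by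
  have hstep (w : ℝ) (hw : w ≠ 0)
      (h : wedgeIntegral θ c (hankelKernel (-w)) = (Real.Gamma w)⁻¹) :
      wedgeIntegral θ c (hankelKernel (-(w + 1))) = (Real.Gamma (w + 1))⁻¹ := by
    have hrec := wedgeIntegral_hankelKernel_add_mul hθ hc (-w)
    rw [← neg_add', h] at hrec
    rw [Real.Gamma_add_one hw, mul_inv, eq_inv_mul_iff_mul_eq₀ hw]
    linarith
  have hnonNat (n : ℕ) : ∀ w ∉ Set.range ((↑) : ℕ → ℝ), w ≤ n - 1 →
      wedgeIntegral θ c (hankelKernel (-w)) = (Real.Gamma w)⁻¹ := by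
    induction n with
    | zero =>
      intro w _ hwn
      rw [Nat.cast_zero] at hwn
      rw [wedgeIntegral_hankelKernel_eq_vertex_zero hθ hc.le (by linarith),
        wedgeIntegral_hankelKernel_vertex_zero hθ (by linarith), neg_neg]
    | succ n ih =>
      intro w hw hwn
      rw [Nat.cast_succ] at hwn
      have hpred (m : ℕ) : w - 1 ≠ m := fun h => hw ⟨m + 1, by push_cast; linarith⟩
      simpa using hstep (w - 1) (by exact_mod_cast hpred 0)
        (ih (w - 1) (fun ⟨m, hm⟩ => hpred m hm.symm) (by linarith))
  have hdense : Dense (Set.range ((↑) : ℕ → ℝ))ᶜ := (Set.countable_range _).dense_compl ℝ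
  refine congrFun (Continuous.ext_on hdense
    ((continuous_wedgeIntegral_hankelKernel hθ hc).comp continuous_neg)
    continuous_inv_Gamma fun w hw => ?_) w
  obtain ⟨n, hn⟩ := exists_nat_ge (w + 1)
  exact hnonNat n w hw (by linarith)

end Hankel

section Representations

variable {θ c : ℝ}

lemma hasSum_hankelKernel_mul_exp (μ α z : ℝ) {t : ℂ} (ht : t ≠ 0) :
    HasSum (fun n : ℕ => ((z ^ n / n.factorial : ℝ) : ℂ) * hankelKernel (-(-α * n + μ)) t)
      (hankelKernel (-μ) t * Complex.exp (z * t ^ (α : ℂ))) := by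
  have hexp : HasSum (fun n : ℕ => (z * t ^ (α : ℂ)) ^ n / n.factorial)
      (Complex.exp (z * t ^ (α : ℂ))) := by
    rw [Complex.exp_eq_exp_ℂ]
    exact NormedSpace.expSeries_div_hasSum_exp _
  refine (hexp.mul_left (hankelKernel (-μ) t)).congr_fun fun n => ?_
  rw [show -(-α * n + μ) = -μ + n * α by ring, hankelKernel_add_natCast_mul _ _ _ ht]
  push_cast
  ring

lemma norm_pow_div_factorial_mul_hankelKernel (μ α z : ℝ) {t : ℂ} (ht : t ≠ 0) (n : ℕ) :
    ‖((z ^ n / n.factorial : ℝ) : ℂ) * hankelKernel (-(-α * n + μ)) t‖ =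
      ‖hankelKernel (-μ) t‖ * ((|z| * ‖t‖ ^ α) ^ n / n.factorial) := by
  rw [show -(-α * n + μ) = -μ + n * α by ring, hankelKernel_add_natCast_mul _ _ _ ht]
  simp only [Complex.ofReal_div, Complex.ofReal_pow, Complex.ofReal_natCast, norm_mul, norm_div,
    norm_pow, Complex.norm_real, Real.norm_eq_abs, RCLike.norm_natCast, Complex.norm_cpow_real]
  ring

lemma wrightFn_neg_eq_wedgeIntegral {α : ℝ} (hα : α ∈ Set.Ico 0 1) (hθ : θ ∈ Set.Ioo (π / 2) π)
    (hc : 0 < c) (μ z : ℝ) :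
    wrightFn (-α) μ z =
      wedgeIntegral θ c fun t => hankelKernel (-μ) t * Complex.exp (z * t ^ (α : ℂ)) := by
  have hne : ∀ r > 0, ray θ c r ≠ 0 := fun r hr =>
    ray_ne_zero ⟨by linarith [hθ.1, pi_pos], hθ.2⟩ hc (le_of_lt hr)
  have hexp (x : ℝ) : HasSum (fun n : ℕ => x ^ n / n.factorial) (exp x) := by
    rw [Real.exp_eq_exp_ℝ]
    exact NormedSpace.expSeries_div_hasSum_exp x
  have hsum := hasSum_wedgeIntegral (θ := θ) (c := c)
    (F := fun n t => ((z ^ n / n.factorial : ℝ) : ℂ) * hankelKernel (-(-α * n + μ)) t)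
    (f := fun t => hankelKernel (-μ) t * Complex.exp (z * t ^ (α : ℂ)))
    (b := fun n r => ‖hankelKernel (-μ) (ray θ c r)‖ *
      ((|z| * ‖ray θ c r‖ ^ α) ^ n / n.factorial))
    (fun n => by fun_prop)
    (fun n r hr => (norm_pow_div_factorial_mul_hankelKernel μ α z (hne r hr) n).le)
    (fun r _ => (hexp _).mul_left _)
    (integrableOn_norm_hankelKernel_ray_mul_exp hθ hc (-μ) hα (abs_nonneg z))
    (fun r hr => hasSum_hankelKernel_mul_exp μ α z (hne r hr))
  rw [wrightFn, ← hsum.tsum_eq]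
  refine tsum_congr fun n => ?_
  rw [wedgeIntegral_ofReal_mul, wedgeIntegral_hankelKernel_neg hθ hc, div_mul_eq_div_div,
    div_eq_mul_inv _ (Real.Gamma _)]

lemma pow_mul_hankelKernel_eq (α β z : ℝ) {t : ℂ} (ht : t ≠ 0) (n : ℕ) :
    ((z ^ n : ℝ) : ℂ) * hankelKernel (-(α * n + β)) t =
      hankelKernel (-β) t * (z / t ^ (α : ℂ)) ^ n := by
  have hpow : t ^ (α : ℂ) ≠ 0 := by simp [Complex.cpow_eq_zero_iff, ht]
  have h := hankelKernel_add_natCast_mul (-(α * n + β)) α n ht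
  rw [show -(α * n + β) + n * α = -β by ring] at h
  rw [h, div_pow, Complex.ofReal_pow]
  field_simp

lemma hasSum_hankelKernel_div_sub (α β : ℝ) {z : ℝ} {t : ℂ} (ht : t ≠ 0)
    (hz : |z| < ‖t ^ (α : ℂ)‖) :
    HasSum (fun n : ℕ => ((z ^ n : ℝ) : ℂ) * hankelKernel (-(α * n + β)) t)
      (hankelKernel (α - β) t / (t ^ (α : ℂ) - z)) := by
  have hpos : 0 < ‖t ^ (α : ℂ)‖ := (abs_nonneg z).trans_lt hz
  have hratio : ‖(z : ℂ) / t ^ (α : ℂ)‖ < 1 := by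
    rwa [norm_div, Complex.norm_real, div_lt_one hpos]
  have h := hankelKernel_add_natCast_mul (-β) α 1 ht
  rw [Nat.cast_one, one_mul, pow_one, neg_add_eq_sub] at h
  have hlimit : hankelKernel (α - β) t / (t ^ (α : ℂ) - z) =
      hankelKernel (-β) t * (1 - z / t ^ (α : ℂ))⁻¹ := by
    rw [h, one_sub_div (norm_pos_iff.1 hpos), inv_div, mul_div_assoc]
  simp only [pow_mul_hankelKernel_eq α β z ht, hlimit]
  exact (hasSum_geometric_of_norm_lt_one hratio).mul_left _

lemma ML_eq_wedgeIntegral {α z ρ : ℝ} (hθ : θ ∈ Set.Ioo (π / 2) π) (hc : 0 < c) (β : ℝ)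
    (hz : |z| < ρ) (hρ : ∀ r > 0, ρ ≤ ‖ray θ c r ^ (α : ℂ)‖) :
    ML α β z = wedgeIntegral θ c fun t => hankelKernel (α - β) t / (t ^ (α : ℂ) - z) := by
  have hρ0 : 0 < ρ := (abs_nonneg z).trans_lt hz
  have hne : ∀ r > 0, ray θ c r ≠ 0 := fun r hr =>
    ray_ne_zero ⟨by linarith [hθ.1, pi_pos], hθ.2⟩ hc (le_of_lt hr)
  have hbound (n : ℕ) : ∀ r > 0,
      ‖((z ^ n : ℝ) : ℂ) * hankelKernel (-(α * n + β)) (ray θ c r)‖ ≤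
        ‖hankelKernel (-β) (ray θ c r)‖ * (|z| / ρ) ^ n := by
    intro r hr
    rw [pow_mul_hankelKernel_eq α β z (hne r hr), norm_mul, norm_pow, norm_div,
      Complex.norm_real, Real.norm_eq_abs]
    gcongr
    exact hρ r hr
  have hsum := hasSum_wedgeIntegral (θ := θ) (c := c)
    (F := fun n t => ((z ^ n : ℝ) : ℂ) * hankelKernel (-(α * n + β)) t)
    (f := fun t => hankelKernel (α - β) t / (t ^ (α : ℂ) - z))
    (b := fun n r => ‖hankelKernel (-β) (ray θ c r)‖ * (|z| / ρ) ^ n)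
    (fun n => by fun_prop) hbound
    (fun r _ => (hasSum_geometric_of_lt_one (by positivity) ((div_lt_one hρ0).2 hz)).mul_left _)
    ((integrableOn_hankelKernel_ray hθ hc (-β)).norm.mul_const _)
    (fun r hr => hasSum_hankelKernel_div_sub α β (hne r hr) (hz.trans_le (hρ r hr)))
  rw [ML, ← hsum.tsum_eq]
  refine tsum_congr fun n => ?_
  rw [wedgeIntegral_ofReal_mul, wedgeIntegral_hankelKernel_neg hθ hc, div_eq_mul_inv]

end Representations

theorem stmt6_general (α β : ℝ) (hα : α ∈ Set.Ioo (0 : ℝ) 1) (z : ℝ) :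
    ML α β z = ∫ s in Set.Ioi (0 : ℝ), Real.exp (z * s) * wrightFn (-α) (β - α) (-s) := by
  obtain ⟨θ, hθ, c, hc, hre⟩ := exists_ray_forall_le_re_cpow hα (|z| + 1)
  have hα' : α ∈ Set.Ico 0 1 := ⟨hα.1.le, hα.2⟩
  have hmeas : Measurable fun t : ℂ => t ^ (α : ℂ) := by fun_prop
  simp only [wrightFn_neg_eq_wedgeIntegral hα' hθ hc, neg_sub]
  rw [integral_exp_mul_wedgeIntegral (integrableOn_hankelKernel_ray hθ hc (α - β)) hmeas
    ((le_abs_self z).trans_lt (lt_add_one _)) fun r hr => hre r (le_of_lt hr)]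
  exact ML_eq_wedgeIntegral hθ hc β (lt_add_one _)
    fun r hr => (hre r (le_of_lt hr)).trans (Complex.re_le_norm _)

theorem stmt6 (α β : ℝ) (hα : α ∈ Set.Ioo (0 : ℝ) 1) (hβ : 0 < β) :
    (∀ z : ℝ, ML α β z =
      ∫ s in Set.Ioi (0 : ℝ), Real.exp (z * s) * wrightFn (-α) (β - α) (-s)) ∧
    (∀ z : ℝ, 0 ≤ z → ML α 1 (-z) =
      ∫ s in Set.Ioi (0 : ℝ), Real.exp (-z * s) * wrightFn (-α) (1 - α) (-s)) :=
  ⟨fun z => stmt6_general α β hα z, fun z _ => stmt6_general α 1 hα (-z)⟩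
end
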